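/- Let A = (A_1,…,A_n) be a nonnegative vector in ℝ^n, D = n + A_1 + ⋯ + A_n, 1 ≤ p < D, and p_* = Dp/(D−p). Then for every continuously differentiable function f : ℝ^n → ℝ with compact support, (∫_{ℝ^n_A} |f|^{p_*} x^A dx)^{1/p_*} ≤ C_{p,n,A} (∫_{ℝ^n_A} |∇f|^p x^A dx)^{1/p}, where C_{1,n,A} = D^{−1} ( 2^k Γ(1+D/2) / (Γ((A_1+1)/2)⋯Γ((A_n+1)/2)) )^{1/D} when p = 1, and C_{p,n,A} = C_{1,n,A} · D^{1−1/p−1/D} · ((p−1)/(D−p))^{1/p'} · ( p' Γ(D) / (Γ(D/p) Γ(D/p')) )^{1/D} when 1 < p < D, with p' = p/(p−1). -/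

import Mathlib

open MeasureTheory Real Filter

noncomputable section

/-- The positivity region `ℝ^n_A = {x : x_i > 0 whenever A_i > 0}`. -/
def monSet {ι : Type*} [Fintype ι] (A : ι → ℝ) : Set (EuclideanSpace ℝ ι) :=
  {x | ∀ i, 0 < A i → 0 < x i}

/-- The monomial weight `x^A = ∏ |x_i|^{A_i}`. -/
def monWeight {ι : Type*} [Fintype ι] (A : ι → ℝ) (x : EuclideanSpace ℝ ι) : ℝ :=
  ∏ i, |x i| ^ A i

/-- The homogeneous dimension `D = n + A_1 + ⋯ + A_n`. -/
def monDim {ι : Type*} [Fintype ι] (A : ι → ℝ) : ℝ :=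
  (Fintype.card ι : ℝ) + ∑ i, A i

/-- `k = #{i : A_i > 0}`. -/
def monK {ι : Type*} [Fintype ι] (A : ι → ℝ) : ℕ :=
  Nat.card {i : ι // 0 < A i}

/-- `Π(A) = [ (∏ Γ((A_i+1)/2)) / 2^k ]^{2/D}`. -/
def monPi {ι : Type*} [Fintype ι] (A : ι → ℝ) : ℝ :=
  ((∏ i, Gamma ((A i + 1) / 2)) / 2 ^ monK A) ^ (2 / monDim A)

/-- `C_{1,n,A}`, the sharp constant for `p = 1`. -/
def monC1 {ι : Type*} [Fintype ι] (A : ι → ℝ) : ℝ :=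
  (monDim A)⁻¹ *
    ((2 ^ monK A * Gamma (1 + monDim A / 2)) / ∏ i, Gamma ((A i + 1) / 2)) ^ (1 / monDim A)

/-- `C_{p,n,A}`, the sharp constant for `1 ≤ p < D` (piecewise: `p = 1` and `1 < p < D`). -/
def monCp {ι : Type*} [Fintype ι] (A : ι → ℝ) (p : ℝ) : ℝ :=
  if p = 1 then monC1 A
  else
    monC1 A * monDim A ^ (1 - 1 / p - 1 / monDim A) *
      ((p - 1) / (monDim A - p)) ^ (1 / (p / (p - 1))) *
      (p / (p - 1) * Gamma (monDim A) /
        (Gamma (monDim A / p) * Gamma (monDim A / (p / (p - 1))))) ^ (1 / monDim A)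

/-! The proof follows the mass transport approach of Cordero-Erausquin, Nazaret and Villani, with
the Knothe map in place of Brenier's. Enclose the support of `f` in a box carrying the measure
`x^A dx` and let `T` be the Knothe map from the density `|f|^r`, `r = p_*`, to a density `G` of the
same mass. The Jacobian of `T` is triangular, so its determinant is the product of the diagonal
derivatives `∂_i T_i` and the Monge–Ampère equation reads
`|f|^r x^A = (G ∘ T) T^A ∏ ∂_i T_i`. Weighted arithmetic-geometric means, with
`∂_i T_i` of weight `1` and `T_i / x_i` of weight `A_i`, give
`D (|f|^r / G ∘ T)^{1/D} ≤ ∑ (∂_i T_i + A_i T_i / x_i)`, whose right-hand side is the divergence of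
`T` relative to `x^A dx`. Integrating against `|f|^s` with `s = p (D - 1) / (D - p)`, by parts on
the right, and applying Hölder's inequality yields
`D ∫ G^{1 - 1/D} ≤ s ‖∇f‖_p (∫ |x|^q G)^{1/q}` with `q = p'`.

Taking `G` proportional to the extremal profile `(1 + |x|^q)^{-D}` makes both integrals of `G`
explicit beta integrals, and this gives the sharp constant for `1 < p < D`. The case `p = 1` is the
limit `p ↓ 1`. -/

section

open Set Topology

section WeightedInterval

/-- Two positive continuous densities with the same total mass: the data of a transport problem. -/
structure EqualMass {E : Type*} [TopologicalSpace E] [MeasurableSpace E] (μ : Measure E)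
    (φ ψ : E → ℝ) : Prop where
  continuous_left : Continuous φ
  continuous_right : Continuous ψ
  pos_left : ∀ x, 0 < φ x
  pos_right : ∀ x, 0 < ψ x
  integral_eq : ∫ x, φ x ∂μ = ∫ x, ψ x ∂μ

/-- A bounded interval together with a continuous weight which is positive in its interior; the
factor of a weighted box, possibly with a weight that vanishes at an endpoint. -/
structure WeightedInterval where
  left : ℝ
  right : ℝ
  weight : ℝ → ℝ
  left_lt_right : left < right
  continuous_weight : Continuous weight
  weight_pos : ∀ t ∈ Ioo left right, 0 < weight t

namespace WeightedInterval

variable {P : Type*} [TopologicalSpace P] (I : WeightedInterval) {φ ψ : ℝ → ℝ}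

/-- The measure with density `weight` on the open interval. -/
def measure : Measure ℝ :=
  (volume.restrict (Ioo I.left I.right)).withDensity fun t => ENNReal.ofReal (I.weight t)

lemma lintegral_measure (f : ℝ → ENNReal) :
    ∫⁻ t, f t ∂I.measure = ∫⁻ t in Ioo I.left I.right, ENNReal.ofReal (I.weight t) * f t := by
  have := I.continuous_weight
  rw [measure, lintegral_withDensity_eq_lintegral_mul_non_measurable₀ _ (by fun_prop)
    (Eventually.of_forall fun _ => ENNReal.ofReal_lt_top)]
  rfl

lemma integral_measure (f : ℝ → ℝ) :
    ∫ t, f t ∂I.measure = ∫ t in I.left..I.right, f t * I.weight t := by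
  have := I.continuous_weight
  rw [measure, integral_withDensity_eq_integral_toReal_smul₀ (by fun_prop)
    (Eventually.of_forall fun _ => ENNReal.ofReal_lt_top),
    intervalIntegral.integral_of_le I.left_lt_right.le, integral_Ioc_eq_integral_Ioo]
  refine setIntegral_congr_fun measurableSet_Ioo fun t ht => ?_
  simp [ENNReal.toReal_ofReal (I.weight_pos t ht).le, mul_comm]

instance : IsFiniteMeasure I.measure :=
  isFiniteMeasure_withDensity_ofReal
    ((I.continuous_weight.integrableOn_Icc.mono_set Ioo_subset_Icc_self).2)

lemma ae_mem_Ioo : ∀ᵐ t ∂I.measure, t ∈ Ioo I.left I.right :=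
  (withDensity_absolutelyContinuous _ _).ae_le (ae_restrict_mem measurableSet_Ioo)

lemma measure_univ_ne_zero : I.measure univ ≠ 0 := by
  have hpos : 0 < ∫ _, (1 : ℝ) ∂I.measure := by
    rw [integral_measure]
    simpa using intervalIntegral.intervalIntegral_pos_of_pos_on
      (I.continuous_weight.intervalIntegrable _ _) I.weight_pos I.left_lt_right
  intro h
  simp [Measure.measure_univ_eq_zero.1 h] at hpos

/-- The cumulative distribution function of `φ` with respect to the weight. -/
def primitive (φ : ℝ → ℝ) (x : ℝ) : ℝ :=
  ∫ t in I.left..x, φ t * I.weight t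

lemma primitive_left : I.primitive φ I.left = 0 := by
  simp [primitive]

lemma primitive_right : I.primitive φ I.right = ∫ t, φ t ∂I.measure :=
  (I.integral_measure φ).symm

lemma strictMonoOn_primitive (hφ : Continuous φ) (hφ_pos : ∀ t, 0 < φ t) :
    StrictMonoOn (I.primitive φ) (Icc I.left I.right) := by
  intro x hx y hy hxy
  have hint (a b : ℝ) : IntervalIntegrable (fun t => φ t * I.weight t) volume a b :=
    (hφ.mul I.continuous_weight).intervalIntegrable a b
  have hpos : 0 < ∫ t in x..y, φ t * I.weight t :=
    intervalIntegral.intervalIntegral_pos_of_pos_on (hint x y)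
      (fun t ht => mul_pos (hφ_pos t) (I.weight_pos t ⟨hx.1.trans_lt ht.1, ht.2.trans_le hy.2⟩)) hxy
  rw [primitive, primitive,
    ← intervalIntegral.integral_add_adjacent_intervals (hint I.left x) (hint x y)]
  linarith

lemma continuous_primitive {φ : P → ℝ → ℝ} (hφ : Continuous φ.uncurry) :
    Continuous fun q : P × ℝ => I.primitive (φ q.1) q.2 := by
  have := I.continuous_weight
  have hφw : Continuous fun z : (P × ℝ) × ℝ => φ.uncurry (z.1.1, z.2) * I.weight z.2 := by fun_prop
  exact intervalIntegral.continuous_parametric_intervalIntegral_of_continuous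
    (f := fun (q : P × ℝ) t => φ q.1 t * I.weight t) hφw continuous_snd

lemma hasStrictDerivAt_primitive (hφ : Continuous φ) (x : ℝ) :
    HasStrictDerivAt (I.primitive φ) (φ x * I.weight x) x := by
  have hφw : Continuous fun t => φ t * I.weight t := hφ.mul I.continuous_weight
  exact intervalIntegral.integral_hasStrictDerivAt_right (hφw.intervalIntegrable _ _)
    (hφw.stronglyMeasurableAtFilter _ _) hφw.continuousAt

lemma continuousOn_primitive (hφ : Continuous φ) (s : Set ℝ) :
    ContinuousOn (I.primitive φ) s :=
  fun x _ => (I.hasStrictDerivAt_primitive hφ x).hasDerivAt.continuousAt.continuousWithinAt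

/-- The monotone rearrangement of the density `φ` onto the density `ψ`: the point of the interval
at which the mass of `ψ` reaches the mass of `φ` to the left of `x`. It is constant on either side
of the interval, so that it is continuous on the whole line. -/
def transport (φ ψ : ℝ → ℝ) (x : ℝ) : ℝ :=
  Function.invFunOn (I.primitive ψ) (Icc I.left I.right)
    (I.primitive φ (projIcc I.left I.right I.left_lt_right.le x))

section Transport

variable (h : EqualMass I.measure φ ψ)
include h

lemma exists_primitive_eq (x : ℝ) : ∃ y ∈ Icc I.left I.right,
    I.primitive ψ y = I.primitive φ (projIcc I.left I.right I.left_lt_right.le x) := by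
  have hle := I.left_lt_right.le
  have hmono := (I.strictMonoOn_primitive h.continuous_left h.pos_left).monotoneOn
  have hx := (projIcc I.left I.right hle x).2
  apply intermediate_value_Icc hle (I.continuousOn_primitive h.continuous_right _)
  rw [primitive_right, ← h.integral_eq, ← primitive_right, primitive_left,
    ← I.primitive_left (φ := φ)]
  exact ⟨hmono (left_mem_Icc.2 hle) hx hx.1, hmono hx (right_mem_Icc.2 hle) hx.2⟩

lemma transport_mem_Icc (x : ℝ) : I.transport φ ψ x ∈ Icc I.left I.right :=
  Function.invFunOn_mem (I.exists_primitive_eq h x)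

lemma primitive_transport_eq_projIcc (x : ℝ) : I.primitive ψ (I.transport φ ψ x) =
    I.primitive φ (projIcc I.left I.right I.left_lt_right.le x) :=
  Function.invFunOn_eq (I.exists_primitive_eq h x)

lemma primitive_transport {x : ℝ} (hx : x ∈ Icc I.left I.right) :
    I.primitive ψ (I.transport φ ψ x) = I.primitive φ x := by
  rw [I.primitive_transport_eq_projIcc h, projIcc_of_mem _ hx]

lemma transport_lt_iff {x y : ℝ} (hy : y ∈ Icc I.left I.right) :
    I.transport φ ψ x < y ↔
      I.primitive φ (projIcc I.left I.right I.left_lt_right.le x) < I.primitive ψ y := by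
  rw [← I.primitive_transport_eq_projIcc h,
    (I.strictMonoOn_primitive h.continuous_right h.pos_right).lt_iff_lt
      (I.transport_mem_Icc h x) hy]

lemma lt_transport_iff {x y : ℝ} (hy : y ∈ Icc I.left I.right) :
    y < I.transport φ ψ x ↔
      I.primitive ψ y < I.primitive φ (projIcc I.left I.right I.left_lt_right.le x) := by
  rw [← I.primitive_transport_eq_projIcc h,
    (I.strictMonoOn_primitive h.continuous_right h.pos_right).lt_iff_lt hy
      (I.transport_mem_Icc h x)]

lemma transport_mem_Ioo {x : ℝ} (hx : x ∈ Ioo I.left I.right) :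
    I.transport φ ψ x ∈ Ioo I.left I.right := by
  have hle := I.left_lt_right.le
  have hmono := I.strictMonoOn_primitive h.continuous_left h.pos_left
  have hxI := Ioo_subset_Icc_self hx
  constructor
  · rw [I.lt_transport_iff h (left_mem_Icc.2 hle), projIcc_of_mem hle hxI,
      primitive_left, ← I.primitive_left (φ := φ)]
    exact hmono (left_mem_Icc.2 hle) hxI hx.1
  · rw [I.transport_lt_iff h (right_mem_Icc.2 hle), projIcc_of_mem hle hxI,
      primitive_right, ← h.integral_eq, ← primitive_right]
    exact hmono hxI (right_mem_Icc.2 hle) hx.2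

omit h in
lemma continuous_transport {φ ψ : P → ℝ → ℝ} (hφ : Continuous φ.uncurry)
    (hψ : Continuous ψ.uncurry) (h : ∀ p, EqualMass I.measure (φ p) (ψ p)) :
    Continuous fun q : P × ℝ => I.transport (φ q.1) (ψ q.1) q.2 := by
  have hle := I.left_lt_right.le
  have hmem (q : P × ℝ) := I.transport_mem_Icc (h q.1) q.2
  have hφc : Continuous fun q : P × ℝ => I.primitive (φ q.1) (projIcc I.left I.right hle q.2) :=
    (I.continuous_primitive hφ).comp
      (continuous_fst.prodMk ((continuous_projIcc (h := hle)).subtype_val.comp continuous_snd))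
  have hψc (y : ℝ) : Continuous fun q : P × ℝ => I.primitive (ψ q.1) y :=
    (I.continuous_primitive hψ).comp (continuous_fst.prodMk continuous_const)
  refine continuous_iff_continuousAt.2 fun q₀ => tendsto_order.2 ⟨fun y hy => ?_, fun y hy => ?_⟩
  · rcases lt_or_ge y I.left with hyl | hyl
    · exact Eventually.of_forall fun q => hyl.trans_le (hmem q).1
    have hyI : y ∈ Icc I.left I.right := ⟨hyl, hy.le.trans (hmem q₀).2⟩
    have hiff (q : P × ℝ) := I.lt_transport_iff (h q.1) (x := q.2) hyI
    filter_upwards [(hψc y).continuousAt.eventually_lt hφc.continuousAt ((hiff q₀).1 hy)] with q hq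
    exact (hiff q).2 hq
  · rcases lt_or_ge I.right y with hyr | hyr
    · exact Eventually.of_forall fun q => (hmem q).2.trans_lt hyr
    have hyI : y ∈ Icc I.left I.right := ⟨(hmem q₀).1.trans hy.le, hyr⟩
    have hiff (q : P × ℝ) := I.transport_lt_iff (h q.1) (x := q.2) hyI
    filter_upwards [hφc.continuousAt.eventually_lt (hψc y).continuousAt ((hiff q₀).1 hy)] with q hq
    exact (hiff q).2 hq

lemma hasDerivAt_transport {x : ℝ} (hx : x ∈ Ioo I.left I.right) :
    HasDerivAt (I.transport φ ψ) (φ x * I.weight x /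
      (ψ (I.transport φ ψ x) * I.weight (I.transport φ ψ x))) x := by
  set T := I.transport φ ψ
  have hT : Continuous T := (I.continuous_transport (P := Unit) (φ := fun _ => φ)
    (ψ := fun _ => ψ) (h.continuous_left.comp continuous_snd)
    (h.continuous_right.comp continuous_snd) fun _ => h).comp (Continuous.prodMk_right ())
  have hψT := I.hasStrictDerivAt_primitive h.continuous_right (T x)
  have hne : ψ (T x) * I.weight (T x) ≠ 0 := (mul_pos (h.pos_right _)
    (I.weight_pos _ (I.transport_mem_Ioo h hx))).ne'
  have hinv := hψT.to_localInverse hne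
  rw [I.primitive_transport h (Ioo_subset_Icc_self hx)] at hinv
  have hcomp := hinv.hasDerivAt.comp x (I.hasStrictDerivAt_primitive h.continuous_left x).hasDerivAt
  rw [div_eq_inv_mul]
  refine hcomp.congr_of_eventuallyEq ?_
  have hleft : ∀ᶠ y in 𝓝 x, hψT.localInverse _ _ _ hne (I.primitive ψ (T y)) = T y :=
    hT.continuousAt.eventually (hψT.hasStrictFDerivAt_equiv hne).eventually_left_inverse
  filter_upwards [hleft, Ioo_mem_nhds hx.1 hx.2] with y hy hyI
  rw [← hy, I.primitive_transport h (Ioo_subset_Icc_self hyI)]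
  rfl

lemma bijOn_transport :
    BijOn (I.transport φ ψ) (Ioo I.left I.right) (Ioo I.left I.right) := by
  have hle := I.left_lt_right.le
  have heq {x : ℝ} (hx : x ∈ Ioo I.left I.right) :=
    I.primitive_transport h (Ioo_subset_Icc_self hx)
  have hψm := I.strictMonoOn_primitive h.continuous_right h.pos_right
  refine ⟨fun x hx => I.transport_mem_Ioo h hx, fun x hx y hy hxy => ?_,
    fun y hy => ?_⟩
  · refine (I.strictMonoOn_primitive h.continuous_left h.pos_left).injOn (Ioo_subset_Icc_self hx)
      (Ioo_subset_Icc_self hy) ?_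
    rw [← heq hx, ← heq hy, hxy]
  · have hyI := Ioo_subset_Icc_self hy
    have hval : I.primitive ψ y ∈ Ioo (I.primitive φ I.left) (I.primitive φ I.right) := by
      rw [primitive_left, primitive_right, h.integral_eq, ← primitive_right,
        ← I.primitive_left (φ := ψ)]
      exact ⟨hψm (left_mem_Icc.2 hle) hyI hy.1, hψm hyI (right_mem_Icc.2 hle) hy.2⟩
    obtain ⟨x, hx, hxy⟩ :=
      intermediate_value_Ioo hle (I.continuousOn_primitive h.continuous_left _) hval
    exact ⟨x, hx, hψm.injOn (I.transport_mem_Icc h x) hyI ((heq hx).trans hxy)⟩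

lemma lintegral_comp_transport (g : ℝ → ENNReal) :
    ∫⁻ x, ENNReal.ofReal (φ x) * g (I.transport φ ψ x) ∂I.measure =
      ∫⁻ y, ENNReal.ofReal (ψ y) * g y ∂I.measure := by
  have hbij := I.bijOn_transport h
  rw [lintegral_measure, lintegral_measure]
  conv_rhs => rw [← hbij.image_eq]
  rw [lintegral_image_eq_lintegral_abs_deriv_mul measurableSet_Ioo (fun x hx =>
    (I.hasDerivAt_transport h hx).hasDerivWithinAt) hbij.injOn]
  refine setLIntegral_congr_fun measurableSet_Ioo fun x hx => ?_
  have hwT : 0 < I.weight (I.transport φ ψ x) := I.weight_pos _ (hbij.mapsTo hx)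
  have hw : 0 < I.weight x := I.weight_pos x hx
  have hψT : 0 < ψ (I.transport φ ψ x) := h.pos_right _
  simp only [← mul_assoc]
  rw [← ENNReal.ofReal_mul hw.le, ← ENNReal.ofReal_mul (abs_nonneg _),
    ← ENNReal.ofReal_mul (by positivity), abs_of_pos (by have := h.pos_left x; positivity)]
  congr 2
  field_simp

end Transport

end WeightedInterval

end WeightedInterval

section Box

/-- The product measure on a box with weighted sides. -/
def boxMeasure {ι : Type*} [Fintype ι] (B : ι → WeightedInterval) : Measure (ι → ℝ) :=
  Measure.pi fun i => (B i).measure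

/-- The interior of a box with weighted sides. -/
def openBox {ι : Type*} (B : ι → WeightedInterval) : Set (ι → ℝ) :=
  univ.pi fun i => Ioo (B i).left (B i).right

section Fintype

variable {ι : Type*} [Fintype ι] (B : ι → WeightedInterval)

instance : IsFiniteMeasure (boxMeasure B) :=
  inferInstanceAs (IsFiniteMeasure (Measure.pi fun i => (B i).measure))

lemma ae_mem_openBox : ∀ᵐ x ∂boxMeasure B, x ∈ openBox B := by
  simp only [openBox, mem_univ_pi, ae_all_iff]
  exact fun i => (Measure.tendsto_eval_ae_ae (i := i)).eventually (B i).ae_mem_Ioo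

lemma restrict_boxMeasure_Icc :
    (boxMeasure B).restrict (Icc (fun i => (B i).left) fun i => (B i).right) = boxMeasure B := by
  refine Measure.restrict_eq_self_of_ae_mem ((ae_mem_openBox B).mono fun x hx => ?_)
  rw [openBox, mem_univ_pi] at hx
  exact ⟨fun i => (hx i).1.le, fun i => (hx i).2.le⟩

lemma integrable_boxMeasure_of_continuous {f : (ι → ℝ) → ℝ} (hf : Continuous f) :
    Integrable f (boxMeasure B) := by
  rw [← restrict_boxMeasure_Icc]
  exact hf.continuousOn.integrableOn_compact isCompact_Icc

lemma integral_boxMeasure_pos {f : (ι → ℝ) → ℝ} (hf : Continuous f) (hf_pos : ∀ x, 0 < f x) :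
    0 < ∫ x, f x ∂boxMeasure B := by
  rw [integral_pos_iff_support_of_nonneg (fun x => (hf_pos x).le)
      (integrable_boxMeasure_of_continuous B hf),
    eq_univ_of_forall (s := Function.support f) fun x => (hf_pos x).ne', boxMeasure,
    Measure.pi_univ]
  exact pos_iff_ne_zero.2 (Finset.prod_ne_zero_iff.2 fun i _ => (B i).measure_univ_ne_zero)

lemma continuous_integral_boxMeasure {P : Type*} [TopologicalSpace P] [FirstCountableTopology P]
    [LocallyCompactSpace P] {f : P → (ι → ℝ) → ℝ} (hf : Continuous f.uncurry) :
    Continuous fun p => ∫ x, f p x ∂boxMeasure B := by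
  rw [← restrict_boxMeasure_Icc]
  exact continuous_parametric_integral_of_continuous hf isCompact_Icc

end Fintype

section Fin

variable {n : ℕ} (B : Fin (n + 1) → WeightedInterval)

lemma insertNth_mem_openBox (i : Fin (n + 1)) {t : ℝ} {y : Fin n → ℝ} :
    i.insertNth t y ∈ openBox B ↔
      t ∈ Ioo (B i).left (B i).right ∧ y ∈ openBox (i.removeNth B) := by
  simp only [openBox, mem_univ_pi, Fin.forall_iff_succAbove i, Fin.insertNth_apply_same,
    Fin.insertNth_apply_succAbove, Fin.removeNth]

lemma measurePreserving_insertNth (i : Fin (n + 1)) :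
    MeasurePreserving (MeasurableEquiv.piFinSuccAbove (fun _ => ℝ) i).symm
      ((B i).measure.prod (boxMeasure (i.removeNth B))) (boxMeasure B) :=
  (measurePreserving_piFinSuccAbove (fun i => (B i).measure) i).symm

lemma lintegral_boxMeasure_cons {f : (Fin (n + 1) → ℝ) → ENNReal} (hf : Measurable f) :
    ∫⁻ x, f x ∂boxMeasure B =
      ∫⁻ t, ∫⁻ y, f (Fin.cons t y) ∂boxMeasure (Fin.tail B) ∂(B 0).measure := by
  have h := measurePreserving_insertNth B 0
  rw [← h.lintegral_comp hf]
  simpa [Fin.insertNth_zero', MeasurableEquiv.piFinSuccAbove, Fin.insertNthEquiv] using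
    lintegral_prod _ (hf.comp h.measurable).aemeasurable

lemma integrable_comp_insertNth_iff (i : Fin (n + 1)) {f : (Fin (n + 1) → ℝ) → ℝ} :
    Integrable (fun z : ℝ × (Fin n → ℝ) => f (i.insertNth z.1 z.2))
      ((B i).measure.prod (boxMeasure (i.removeNth B))) ↔ Integrable f (boxMeasure B) :=
  (measurePreserving_insertNth B i).integrable_comp_emb (MeasurableEquiv.measurableEmbedding _)

lemma integral_boxMeasure_insertNth (i : Fin (n + 1)) {f : (Fin (n + 1) → ℝ) → ℝ}
    (hf : Integrable f (boxMeasure B)) : ∫ x, f x ∂boxMeasure B =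
      ∫ y, ∫ t, f (i.insertNth t y) ∂(B i).measure ∂boxMeasure (i.removeNth B) := by
  rw [← (measurePreserving_insertNth B i).integral_comp']
  exact integral_prod_symm _ ((integrable_comp_insertNth_iff B i).2 hf)

lemma integral_boxMeasure_cons {f : (Fin (n + 1) → ℝ) → ℝ} (hf : Integrable f (boxMeasure B)) :
    ∫ x, f x ∂boxMeasure B =
      ∫ t, ∫ y, f (Fin.cons t y) ∂boxMeasure (Fin.tail B) ∂(B 0).measure := by
  rw [← (measurePreserving_insertNth B 0).integral_comp']
  simpa [Fin.insertNth_zero', MeasurableEquiv.piFinSuccAbove, Fin.insertNthEquiv] using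
    integral_prod _ ((integrable_comp_insertNth_iff B 0).2 hf)

end Fin

end Box

section Knothe

/-- The density of the first coordinate under the density `F` on a box. -/
def firstMarginal {n : ℕ} (B : Fin (n + 1) → WeightedInterval) (F : (Fin (n + 1) → ℝ) → ℝ)
    (t : ℝ) : ℝ :=
  ∫ y, F (Fin.cons t y) ∂boxMeasure (Fin.tail B)

/-- The first coordinate of the Knothe map: the monotone rearrangement of the first marginals. -/
def headTransport {n : ℕ} (B : Fin (n + 1) → WeightedInterval) (F G : (Fin (n + 1) → ℝ) → ℝ) :
    ℝ → ℝ :=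
  (B 0).transport (firstMarginal B F) (firstMarginal B G)

/-- The slice of `G` over the image of `t` under `headTransport`, rescaled to have the mass of the
slice of `F` over `t`. -/
def targetSlice {n : ℕ} (B : Fin (n + 1) → WeightedInterval) (F G : (Fin (n + 1) → ℝ) → ℝ)
    (t : ℝ) (y : Fin n → ℝ) : ℝ :=
  G (Fin.cons (headTransport B F G t) y) *
    (firstMarginal B F t / firstMarginal B G (headTransport B F G t))

/-- The Knothe map of a box, carrying the density `F` onto the density `G`: its `i`-th coordinate
depends on the first `i` variables only and is increasing in the last of these. -/
def knothe : {n : ℕ} → (Fin n → WeightedInterval) → ((Fin n → ℝ) → ℝ) → ((Fin n → ℝ) → ℝ) →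
    (Fin n → ℝ) → Fin n → ℝ
  | 0, _, _, _, x => x
  | _ + 1, B, F, G, x => Fin.cons (headTransport B F G (x 0))
      (knothe (Fin.tail B) (fun y => F (Fin.cons (x 0) y)) (targetSlice B F G (x 0)) (Fin.tail x))

/-- The diagonal entries of the (triangular) Jacobian matrix of the Knothe map. -/
def knotheDiag {n : ℕ} (B : Fin n → WeightedInterval) (F G : (Fin n → ℝ) → ℝ) (x : Fin n → ℝ)
    (i : Fin n) : ℝ :=
  deriv (fun t => knothe B F G (Function.update x i t) i) (x i)

section Recursion

variable {n : ℕ} (B : Fin (n + 1) → WeightedInterval) (F G : (Fin (n + 1) → ℝ) → ℝ)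
  (x : Fin (n + 1) → ℝ) (j : Fin n)

lemma knothe_apply_zero : knothe B F G x 0 = headTransport B F G (x 0) := rfl

lemma knothe_apply_succ : knothe B F G x j.succ =
    knothe (Fin.tail B) (fun y => F (Fin.cons (x 0) y)) (targetSlice B F G (x 0)) (Fin.tail x) j :=
  rfl

lemma knothe_update_zero (t : ℝ) :
    knothe B F G (Function.update x 0 t) 0 = headTransport B F G t := by
  simp [knothe_apply_zero]

lemma knothe_update_succ (t : ℝ) : knothe B F G (Function.update x j.succ t) j.succ =
    knothe (Fin.tail B) (fun y => F (Fin.cons (x 0) y)) (targetSlice B F G (x 0))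
      (Function.update (Fin.tail x) j t) j := by
  simp [knothe_apply_succ, Fin.tail_update_succ, Function.update_of_ne (Fin.succ_ne_zero j).symm]

lemma knotheDiag_zero : knotheDiag B F G x 0 = deriv (headTransport B F G) (x 0) := by
  simp only [knotheDiag, knothe_update_zero]

lemma knotheDiag_succ : knotheDiag B F G x j.succ = knotheDiag (Fin.tail B)
    (fun y => F (Fin.cons (x 0) y)) (targetSlice B F G (x 0)) (Fin.tail x) j := by
  simp only [knotheDiag, knothe_update_succ, Fin.tail]

end Recursion

lemma continuous_slice {P : Type*} [TopologicalSpace P] {n : ℕ} {F : P → (Fin (n + 1) → ℝ) → ℝ}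
    (hF : Continuous F.uncurry) :
    Continuous fun z : (P × ℝ) × (Fin n → ℝ) => F z.1.1 (Fin.cons z.1.2 z.2) :=
  hF.comp (f := fun z : (P × ℝ) × (Fin n → ℝ) => (z.1.1, (Fin.cons z.1.2 z.2 : Fin (n + 1) → ℝ)))
    (by fun_prop)

lemma continuous_firstMarginal {P : Type*} [TopologicalSpace P] [FirstCountableTopology P]
    [LocallyCompactSpace P] {n : ℕ} (B : Fin (n + 1) → WeightedInterval)
    {F : P → (Fin (n + 1) → ℝ) → ℝ} (hF : Continuous F.uncurry) :
    Continuous fun q : P × ℝ => firstMarginal B (F q.1) q.2 :=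
  continuous_integral_boxMeasure (Fin.tail B)
    (f := fun (q : P × ℝ) y => F q.1 (Fin.cons q.2 y)) (continuous_slice hF)

section Slices

variable {n : ℕ} {B : Fin (n + 1) → WeightedInterval} {F G : (Fin (n + 1) → ℝ) → ℝ}

lemma firstMarginal_pos (hF : Continuous F) (hF_pos : ∀ x, 0 < F x) (t : ℝ) :
    0 < firstMarginal B F t :=
  integral_boxMeasure_pos _ (hF.comp (by fun_prop)) fun _ => hF_pos _

lemma EqualMass.firstMarginals (h : EqualMass (boxMeasure B) F G) :
    EqualMass (B 0).measure (firstMarginal B F) (firstMarginal B G) where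
  continuous_left := (continuous_firstMarginal (P := Unit) (F := fun _ => F) B
    (h.continuous_left.comp continuous_snd)).comp (Continuous.prodMk_right ())
  continuous_right := (continuous_firstMarginal (P := Unit) (F := fun _ => G) B
    (h.continuous_right.comp continuous_snd)).comp (Continuous.prodMk_right ())
  pos_left := firstMarginal_pos h.continuous_left h.pos_left
  pos_right := firstMarginal_pos h.continuous_right h.pos_right
  integral_eq := by
    have hF := integral_boxMeasure_cons B (integrable_boxMeasure_of_continuous B h.continuous_left)
    have hG := integral_boxMeasure_cons B (integrable_boxMeasure_of_continuous B h.continuous_right)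
    exact hF.symm.trans (h.integral_eq.trans hG)

lemma EqualMass.slices (h : EqualMass (boxMeasure B) F G) (t : ℝ) :
    EqualMass (boxMeasure (Fin.tail B)) (fun y => F (Fin.cons t y)) (targetSlice B F G t) where
  continuous_left := h.continuous_left.comp (by fun_prop)
  continuous_right := (h.continuous_right.comp (by fun_prop)).mul continuous_const
  pos_left _ := h.pos_left _
  pos_right _ := mul_pos (h.pos_right _) (div_pos (h.firstMarginals.pos_left _)
    (h.firstMarginals.pos_right _))
  integral_eq := by
    simp only [targetSlice]
    rw [integral_mul_const]
    exact (mul_div_cancel₀ _ (h.firstMarginals.pos_right _).ne').symm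

lemma EqualMass.lintegral_targetSlice (h : EqualMass (boxMeasure B) F G)
    {g : (Fin (n + 1) → ℝ) → ENNReal} (hg : Measurable g) (t : ℝ) :
    ∫⁻ y, ENNReal.ofReal (targetSlice B F G t y) * g (Fin.cons (headTransport B F G t) y)
        ∂boxMeasure (Fin.tail B) =
      ENNReal.ofReal (firstMarginal B F t) *
        (ENNReal.ofReal (firstMarginal B G (headTransport B F G t))⁻¹ *
          ∫⁻ y, ENNReal.ofReal (G (Fin.cons (headTransport B F G t) y)) *
            g (Fin.cons (headTransport B F G t) y) ∂boxMeasure (Fin.tail B)) := by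
  have hcons (s : ℝ) : Measurable fun y : Fin n → ℝ => (Fin.cons s y : Fin (n + 1) → ℝ) := by
    fun_prop
  have hφ := h.firstMarginals.pos_left
  have hψ := h.firstMarginals.pos_right
  rw [← mul_assoc, ← ENNReal.ofReal_mul (hφ t).le, ← div_eq_mul_inv, ← lintegral_const_mul]
  · refine lintegral_congr fun y => ?_
    rw [targetSlice, mul_comm (G _), ENNReal.ofReal_mul (div_pos (hφ _) (hψ _)).le, mul_assoc]
  · exact (h.continuous_right.measurable.comp (hcons _)).ennreal_ofReal.mul (hg.comp (hcons _))

end Slices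

lemma continuous_knothe {P : Type*} [TopologicalSpace P] [FirstCountableTopology P]
    [LocallyCompactSpace P] {n : ℕ} (B : Fin n → WeightedInterval) {F G : P → (Fin n → ℝ) → ℝ}
    (hF : Continuous F.uncurry) (hG : Continuous G.uncurry)
    (h : ∀ p, EqualMass (boxMeasure B) (F p) (G p)) :
    Continuous fun q : P × (Fin n → ℝ) => knothe B (F q.1) (G q.1) q.2 := by
  induction n generalizing P with
  | zero => exact continuous_snd
  | succ n ih =>
    have hφ := continuous_firstMarginal B hF
    have hψ := continuous_firstMarginal B hG
    have hS : Continuous fun q : P × ℝ => headTransport B (F q.1) (G q.1) q.2 :=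
      (B 0).continuous_transport hφ hψ fun p => (h p).firstMarginals
    have hψS := hψ.comp (continuous_fst.prodMk hS)
    have hρ := hφ.div hψS fun q => ((h q.1).firstMarginals.pos_right _).ne'
    have hslice : Continuous fun z : (P × ℝ) × (Fin n → ℝ) =>
        targetSlice B (F z.1.1) (G z.1.1) z.1.2 z.2 :=
      ((continuous_slice hG).comp (((continuous_fst.comp continuous_fst).prodMk
        (hS.comp continuous_fst)).prodMk continuous_snd)).mul (hρ.comp continuous_fst)
    have htail := ih (Fin.tail B) (F := fun (q : P × ℝ) y => F q.1 (Fin.cons q.2 y))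
      (G := fun q => targetSlice B (F q.1) (G q.1) q.2) (continuous_slice hF) hslice
      fun q => (h q.1).slices q.2
    have hhead : Continuous fun q : P × (Fin (n + 1) → ℝ) => (q.1, q.2 0) := by fun_prop
    exact (hS.comp hhead).finCons (htail.comp (hhead.prodMk
      (continuous_pi fun j => (continuous_apply j.succ).comp continuous_snd)))

section Map

variable {n : ℕ} {B : Fin n → WeightedInterval} {F G : (Fin n → ℝ) → ℝ}

lemma EqualMass.continuous_knothe (h : EqualMass (boxMeasure B) F G) :
    Continuous (knothe B F G) :=
  (_root_.continuous_knothe (P := Unit) (F := fun _ => F) (G := fun _ => G) B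
    (h.continuous_left.comp continuous_snd) (h.continuous_right.comp continuous_snd)
    fun _ => h).comp (Continuous.prodMk_right ())

lemma EqualMass.measurable_knotheDiag (h : EqualMass (boxMeasure B) F G) :
    Measurable (knotheDiag B F G) := by
  refine measurable_pi_iff.2 fun i => ?_
  have hT : Continuous fun q : (Fin n → ℝ) × ℝ => knothe B F G (Function.update q.1 i q.2) i :=
    (continuous_apply i).comp (h.continuous_knothe.comp (continuous_fst.update i continuous_snd))
  exact (measurable_deriv_with_param (f := fun x t => knothe B F G (Function.update x i t) i)
    hT).comp (measurable_id.prodMk (measurable_pi_apply i))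

lemma EqualMass.knothe_mem_openBox (h : EqualMass (boxMeasure B) F G) {x : Fin n → ℝ}
    (hx : x ∈ openBox B) : knothe B F G x ∈ openBox B := by
  rw [openBox, mem_univ_pi] at hx ⊢
  induction n with
  | zero => exact fun i => i.elim0
  | succ n ih =>
    refine Fin.cases ((B 0).transport_mem_Ioo h.firstMarginals (hx 0)) fun j => ?_
    exact ih (h.slices (x 0)) (fun j => hx j.succ) j

lemma EqualMass.hasDerivAt_knothe (h : EqualMass (boxMeasure B) F G) {x : Fin n → ℝ}
    (hx : x ∈ openBox B) (i : Fin n) :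
    HasDerivAt (fun t => knothe B F G (Function.update x i t) i) (knotheDiag B F G x i) (x i) := by
  rw [openBox, mem_univ_pi] at hx
  refine DifferentiableAt.hasDerivAt ?_
  induction n with
  | zero => exact i.elim0
  | succ n ih =>
    refine Fin.cases ?_ (fun j => ?_) i
    · simp only [knothe_update_zero]
      exact ((B 0).hasDerivAt_transport h.firstMarginals (hx 0)).differentiableAt
    · simp only [knothe_update_succ]
      exact ih (h.slices (x 0)) (fun j => hx j.succ) j

lemma EqualMass.knotheDiag_pos (h : EqualMass (boxMeasure B) F G) {x : Fin n → ℝ}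
    (hx : x ∈ openBox B) (i : Fin n) : 0 < knotheDiag B F G x i := by
  rw [openBox, mem_univ_pi] at hx
  induction n with
  | zero => exact i.elim0
  | succ n ih =>
    refine Fin.cases ?_ (fun j => ?_) i
    · rw [knotheDiag_zero, headTransport,
        ((B 0).hasDerivAt_transport h.firstMarginals (hx 0)).deriv]
      exact div_pos (mul_pos (h.firstMarginals.pos_left _) ((B 0).weight_pos _ (hx 0)))
        (mul_pos (h.firstMarginals.pos_right _)
          ((B 0).weight_pos _ ((B 0).transport_mem_Ioo h.firstMarginals (hx 0))))
    · rw [knotheDiag_succ]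
      exact ih (h.slices (x 0)) (fun j => hx j.succ) j

lemma EqualMass.knothe_mongeAmpere (h : EqualMass (boxMeasure B) F G) {x : Fin n → ℝ}
    (hx : x ∈ openBox B) : F x * ∏ i, (B i).weight (x i) =
      G (knothe B F G x) * (∏ i, (B i).weight (knothe B F G x i)) * ∏ i, knotheDiag B F G x i := by
  have hT := h.knothe_mem_openBox hx
  rw [openBox, mem_univ_pi] at hx hT
  induction n with
  | zero =>
    have hFG := h.integral_eq
    rw [boxMeasure, Measure.pi_of_empty (x := x), integral_dirac, integral_dirac] at hFG
    simpa [knothe] using hFG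
  | succ n ih =>
    have htail := ih (h.slices (x 0)) (fun j => hx j.succ) fun j => hT j.succ
    simp only [targetSlice, Fin.tail] at htail
    rw [show (Fin.cons (x 0) fun j : Fin n => x j.succ) = x from Fin.cons_self_tail x] at htail
    have hψ := h.firstMarginals.pos_right (headTransport B F G (x 0))
    have hw : 0 < (B 0).weight (headTransport B F G (x 0)) := (B 0).weight_pos _ (hT 0)
    have hdiag : knotheDiag B F G x 0 = firstMarginal B F (x 0) * (B 0).weight (x 0) /
        (firstMarginal B G (headTransport B F G (x 0)) *
          (B 0).weight (headTransport B F G (x 0))) := by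
      rw [knotheDiag_zero]
      exact ((B 0).hasDerivAt_transport h.firstMarginals (hx 0)).deriv
    simp only [Fin.prod_univ_succ, hdiag, knotheDiag_succ, knothe_apply_zero, knothe_apply_succ]
    rw [mul_left_comm, htail]
    simp only [knothe, show Fin.tail x = fun j => x j.succ from rfl]
    field_simp

lemma EqualMass.lintegral_comp_knothe (h : EqualMass (boxMeasure B) F G)
    {g : (Fin n → ℝ) → ENNReal} (hg : Measurable g) :
    ∫⁻ x, ENNReal.ofReal (F x) * g (knothe B F G x) ∂boxMeasure B =
      ∫⁻ y, ENNReal.ofReal (G y) * g y ∂boxMeasure B := by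
  induction n with
  | zero =>
    have hFG := h.integral_eq
    rw [boxMeasure, Measure.pi_of_empty, integral_dirac, integral_dirac] at hFG
    rw [boxMeasure, Measure.pi_of_empty, lintegral_dirac, lintegral_dirac, hFG, knothe]
  | succ n ih =>
    set S := headTransport B F G
    set φ := firstMarginal B F
    set ψ := firstMarginal B G
    set H : ℝ → ENNReal := fun s =>
      ∫⁻ y, ENNReal.ofReal (G (Fin.cons s y)) * g (Fin.cons s y) ∂boxMeasure (Fin.tail B)
    have hψ := h.firstMarginals.pos_right
    have hslice (t : ℝ) : ∫⁻ y, ENNReal.ofReal (F (Fin.cons t y)) * g (knothe B F G (Fin.cons t y))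
        ∂boxMeasure (Fin.tail B) =
          ENNReal.ofReal (φ t) * (ENNReal.ofReal (ψ (S t))⁻¹ * H (S t)) :=
      (ih (h.slices t) (g := fun y => g (Fin.cons (S t) y)) (by fun_prop)).trans
        (h.lintegral_targetSlice hg t)
    calc ∫⁻ x, ENNReal.ofReal (F x) * g (knothe B F G x) ∂boxMeasure B
        = ∫⁻ t, ENNReal.ofReal (φ t) * (ENNReal.ofReal (ψ (S t))⁻¹ * H (S t)) ∂(B 0).measure := by
          refine (lintegral_boxMeasure_cons B (h.continuous_left.measurable.ennreal_ofReal.mul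
            (hg.comp h.continuous_knothe.measurable))).trans ?_
          exact lintegral_congr hslice
      _ = ∫⁻ s, ENNReal.ofReal (ψ s) * (ENNReal.ofReal (ψ s)⁻¹ * H s) ∂(B 0).measure :=
          (B 0).lintegral_comp_transport h.firstMarginals fun s => ENNReal.ofReal (ψ s)⁻¹ * H s
      _ = ∫⁻ s, H s ∂(B 0).measure := by
          refine lintegral_congr fun s => ?_
          rw [← mul_assoc, ← ENNReal.ofReal_mul (hψ s).le, mul_inv_cancel₀ (hψ s).ne',
            ENNReal.ofReal_one, one_mul]
      _ = ∫⁻ y, ENNReal.ofReal (G y) * g y ∂boxMeasure B :=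
          (lintegral_boxMeasure_cons B
            (h.continuous_right.measurable.ennreal_ofReal.mul hg)).symm

lemma EqualMass.integral_comp_knothe (h : EqualMass (boxMeasure B) F G) {g : (Fin n → ℝ) → ℝ}
    (hg : Continuous g) (hg_nonneg : ∀ x, 0 ≤ g x) :
    ∫ x, F x * g (knothe B F G x) ∂boxMeasure B = ∫ y, G y * g y ∂boxMeasure B := by
  have hF := h.continuous_left
  have hG := h.continuous_right
  have hT := h.continuous_knothe
  have hF_pos (x) := (h.pos_left x).le
  have hG_pos (x) := (h.pos_right x).le
  rw [integral_eq_lintegral_of_nonneg_ae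
      (Eventually.of_forall fun x => mul_nonneg (hF_pos x) (hg_nonneg _))
      (by fun_prop : Continuous _).aestronglyMeasurable,
    integral_eq_lintegral_of_nonneg_ae
      (Eventually.of_forall fun x => mul_nonneg (hG_pos x) (hg_nonneg x))
      (hG.mul hg).aestronglyMeasurable]
  simp only [ENNReal.ofReal_mul (hF_pos _), ENNReal.ofReal_mul (hG_pos _)]
  rw [h.lintegral_comp_knothe hg.measurable.ennreal_ofReal]

end Map

end Knothe

section Divergence

lemma WeightedInterval.integral_mul_divergence (I : WeightedInterval)
    (hw : ∀ x ∈ Ioo I.left I.right, DifferentiableAt ℝ I.weight x) {u u' T T' : ℝ → ℝ}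
    (hu : ∀ x, HasDerivAt u (u' x) x) (hu' : Continuous u') (hT : Continuous T)
    (hT' : ∀ x ∈ Ioo I.left I.right, HasDerivAt T (T' x) x)
    (hnonneg : ∀ x ∈ Ioo I.left I.right, 0 ≤ u x * (T' x + logDeriv I.weight x * T x))
    (hleft : u I.left * I.weight I.left = 0) (hright : u I.right * I.weight I.right = 0) :
    Integrable (fun x => u x * (T' x + logDeriv I.weight x * T x)) I.measure ∧
      ∫ x, u x * (T' x + logDeriv I.weight x * T x) ∂I.measure = -∫ x, u' x * T x ∂I.measure := by
  set div : ℝ → ℝ := fun x => u x * (T' x + logDeriv I.weight x * T x)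
  have hwc := I.continuous_weight
  have huc : Continuous u := continuous_iff_continuousAt.2 fun x => (hu x).continuousAt
  have hk : Continuous fun t => u' t * T t := hu'.mul hT
  set g : ℝ → ℝ := fun x => u x * T x * I.weight x - I.primitive (fun t => u' t * T t) x
  have hg : ContinuousOn g (Icc I.left I.right) :=
    ((huc.mul hT).mul hwc).continuousOn.sub (I.continuousOn_primitive hk _)
  have hg' : ∀ x ∈ Ioo I.left I.right, HasDerivAt g (div x * I.weight x) x := by
    intro x hx
    refine ((((hu x).mul (hT' x hx)).mul (hw x hx).hasDerivAt).sub
      (I.hasStrictDerivAt_primitive hk x).hasDerivAt).congr_deriv ?_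
    have := (I.weight_pos x hx).ne'
    simp only [div, logDeriv_apply, Pi.mul_apply]
    field_simp
    ring
  have hint : IntegrableOn (fun x => div x * I.weight x) (Ioc I.left I.right) :=
    intervalIntegral.integrableOn_deriv_of_nonneg hg hg'
      fun x hx => mul_nonneg (hnonneg x hx) (I.weight_pos x hx).le
  constructor
  · refine (integrable_withDensity_iff_integrable_smul₀' (by fun_prop)
      (Eventually.of_forall fun _ => ENNReal.ofReal_lt_top)).2 ?_
    refine IntegrableOn.congr_fun (hint.mono_set Ioo_subset_Ioc_self) (fun x hx => ?_)
      measurableSet_Ioo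
    simp [ENNReal.toReal_ofReal (I.weight_pos x hx).le, mul_comm, div]
  · have hval := intervalIntegral.integral_eq_sub_of_hasDerivAt_of_le I.left_lt_right.le hg hg'
      ((intervalIntegrable_iff_integrableOn_Ioc_of_le I.left_lt_right.le).2 hint)
    rw [integral_measure, hval]
    simp [g, mul_right_comm _ (T _), hleft, hright, primitive_left, primitive_right]

section Partial

variable {n : ℕ} (B : Fin (n + 1) → WeightedInterval) (i : Fin (n + 1))
  {u T J : (Fin (n + 1) → ℝ) → ℝ}

lemma integral_mul_partial_divergence_slice
    (hw : ∀ t ∈ Ioo (B i).left (B i).right, DifferentiableAt ℝ (B i).weight t)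
    (hu : ContDiff ℝ 1 u) (hT : Continuous T)
    (hTJ : ∀ x ∈ openBox B, HasDerivAt (fun t => T (Function.update x i t)) (J x) (x i))
    (hnonneg : ∀ x ∈ openBox B, 0 ≤ u x * (J x + logDeriv (B i).weight (x i) * T x))
    (hbdry : ∀ x, x i = (B i).left ∨ x i = (B i).right → u x * (B i).weight (x i) = 0)
    {y : Fin n → ℝ} (hy : y ∈ openBox (i.removeNth B)) :
    Integrable (fun t => u (i.insertNth t y) *
        (J (i.insertNth t y) + logDeriv (B i).weight t * T (i.insertNth t y))) (B i).measure ∧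
      ∫ t, u (i.insertNth t y) *
          (J (i.insertNth t y) + logDeriv (B i).weight t * T (i.insertNth t y)) ∂(B i).measure =
        -∫ t, fderiv ℝ u (i.insertNth t y) (Pi.single i 1) * T (i.insertNth t y)
          ∂(B i).measure := by
  have hmem (t) (ht : t ∈ Ioo (B i).left (B i).right) := (insertNth_mem_openBox B i).2 ⟨ht, hy⟩
  have hslice : Continuous fun t : ℝ => (i.insertNth t y : Fin (n + 1) → ℝ) := by fun_prop
  refine (B i).integral_mul_divergence hw (fun t => ?_) ?_ (hT.comp hslice) (fun t ht => ?_)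
    (fun t ht => ?_) ?_ ?_
  · have hline : HasDerivAt (fun t => (i.insertNth t y : Fin (n + 1) → ℝ))
        (Pi.single i (1 : ℝ)) t := by
      convert hasDerivAt_update (i.insertNth t y : Fin (n + 1) → ℝ) i t using 2
      simp
    exact ((hu.differentiable one_ne_zero) _).hasFDerivAt.comp_hasDerivAt t hline
  · exact ((hu.continuous_fderiv one_ne_zero).comp hslice).clm_apply continuous_const
  · simpa [Fin.update_insertNth] using hTJ _ (hmem t ht)
  · simpa using hnonneg _ (hmem t ht)
  · simpa using hbdry (i.insertNth (B i).left y) (by simp)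
  · simpa using hbdry (i.insertNth (B i).right y) (by simp)

lemma integral_mul_partial_divergence
    (hw : ∀ t ∈ Ioo (B i).left (B i).right, DifferentiableAt ℝ (B i).weight t)
    (hu : ContDiff ℝ 1 u) (hT : Continuous T) (hJ : Measurable J)
    (hTJ : ∀ x ∈ openBox B, HasDerivAt (fun t => T (Function.update x i t)) (J x) (x i))
    (hnonneg : ∀ x ∈ openBox B, 0 ≤ u x * (J x + logDeriv (B i).weight (x i) * T x))
    (hbdry : ∀ x, x i = (B i).left ∨ x i = (B i).right → u x * (B i).weight (x i) = 0) :
    Integrable (fun x => u x * (J x + logDeriv (B i).weight (x i) * T x)) (boxMeasure B) ∧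
      ∫ x, u x * (J x + logDeriv (B i).weight (x i) * T x) ∂boxMeasure B =
        -∫ x, fderiv ℝ u x (Pi.single i 1) * T x ∂boxMeasure B := by
  have hslice : ∀ᵐ y ∂boxMeasure (i.removeNth B), _ :=
    (ae_mem_openBox (i.removeNth B)).mono fun y hy =>
      integral_mul_partial_divergence_slice B i hw hu hT hTJ hnonneg hbdry hy
  have hflux : Integrable (fun x => fderiv ℝ u x (Pi.single i 1) * T x) (boxMeasure B) :=
    integrable_boxMeasure_of_continuous B
      (((hu.continuous_fderiv one_ne_zero).clm_apply continuous_const).mul hT)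
  have hdiv : Integrable (fun x => u x * (J x + logDeriv (B i).weight (x i) * T x))
      (boxMeasure B) := by
    have hmeas : Measurable fun x => u x * (J x + logDeriv (B i).weight (x i) * T x) := by
      have hlog : Measurable (logDeriv (B i).weight) :=
        (measurable_deriv _).div (B i).continuous_weight.measurable
      have := hu.continuous.measurable
      have := hT.measurable
      fun_prop
    refine (integrable_comp_insertNth_iff B i).1 ((integrable_prod_iff'
      (hmeas.comp (measurePreserving_insertNth B i).measurable).aestronglyMeasurable).2 ?_)
    refine ⟨by simpa [Fin.insertNthEquiv] using hslice.mono fun y hy => hy.1, ?_⟩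
    refine ((integrable_comp_insertNth_iff B i).2 hflux).integral_prod_right.neg.congr ?_
    filter_upwards [hslice, ae_mem_openBox (i.removeNth B)] with y hy hy_mem
    rw [Pi.neg_apply, ← hy.2]
    refine integral_congr_ae ((B i).ae_mem_Ioo.mono fun t ht => ?_)
    have hmem := (insertNth_mem_openBox B i).2 ⟨ht, hy_mem⟩
    simpa [Fin.insertNthEquiv] using (abs_of_nonneg (hnonneg _ hmem)).symm
  refine ⟨hdiv, ?_⟩
  rw [integral_boxMeasure_insertNth B i hdiv, integral_boxMeasure_insertNth B i hflux,
    ← integral_neg]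
  exact integral_congr_ae (hslice.mono fun y hy => by simpa using hy.2)

end Partial

lemma integral_mul_divergence {n : ℕ} (B : Fin n → WeightedInterval)
    {u : (Fin n → ℝ) → ℝ} {T J : (Fin n → ℝ) → Fin n → ℝ}
    (hw : ∀ i, ∀ t ∈ Ioo (B i).left (B i).right, DifferentiableAt ℝ (B i).weight t)
    (hu : ContDiff ℝ 1 u) (hT : Continuous T) (hJ : Measurable J)
    (hTJ : ∀ x ∈ openBox B, ∀ i,
      HasDerivAt (fun t => T (Function.update x i t) i) (J x i) (x i))
    (hnonneg : ∀ x ∈ openBox B, ∀ i,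
      0 ≤ u x * (J x i + logDeriv (B i).weight (x i) * T x i))
    (hbdry : ∀ x i, x i = (B i).left ∨ x i = (B i).right → u x * (B i).weight (x i) = 0) :
    Integrable (fun x => u x * ∑ i, (J x i + logDeriv (B i).weight (x i) * T x i))
        (boxMeasure B) ∧
      ∫ x, u x * ∑ i, (J x i + logDeriv (B i).weight (x i) * T x i) ∂boxMeasure B =
        -∫ x, fderiv ℝ u x (T x) ∂boxMeasure B := by
  have hpartial (i : Fin n) :
      Integrable (fun x => u x * (J x i + logDeriv (B i).weight (x i) * T x i)) (boxMeasure B) ∧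
        ∫ x, u x * (J x i + logDeriv (B i).weight (x i) * T x i) ∂boxMeasure B =
          -∫ x, fderiv ℝ u x (Pi.single i 1) * T x i ∂boxMeasure B := by
    cases n with
    | zero => exact i.elim0
    | succ n =>
      exact integral_mul_partial_divergence B i (hw i) hu (by fun_prop) (by fun_prop)
        (fun x hx => hTJ x hx i) (fun x hx => hnonneg x hx i) fun x => hbdry x i
  have hflux (i : Fin n) :
      Integrable (fun x => fderiv ℝ u x (Pi.single i 1) * T x i) (boxMeasure B) :=
    integrable_boxMeasure_of_continuous B
      (((hu.continuous_fderiv one_ne_zero).clm_apply continuous_const).mul (by fun_prop))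
  have hfderiv (x : Fin n → ℝ) :
      fderiv ℝ u x (T x) = ∑ i, fderiv ℝ u x (Pi.single i 1) * T x i := by
    conv_lhs => rw [← Finset.univ_sum_single (T x), map_sum]
    refine Finset.sum_congr rfl fun i _ => ?_
    rw [mul_comm, ← smul_eq_mul, ← map_smul, ← Pi.single_smul, smul_eq_mul, mul_one]
  simp only [Finset.mul_sum, hfderiv]
  refine ⟨integrable_finsetSum _ fun i _ => (hpartial i).1, ?_⟩
  rw [integral_finsetSum _ fun i _ => (hpartial i).1, integral_finsetSum _ fun i _ => hflux i,
    ← Finset.sum_neg_distrib]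
  exact Finset.sum_congr rfl fun i _ => (hpartial i).2

end Divergence

section MonomialBox

lemma weighted_amgm {ι : Type*} [Fintype ι] {A : ι → ℝ} (hA : ∀ i, 0 ≤ A i) (hD : 0 < monDim A)
    {J r : ι → ℝ} (hJ : ∀ i, 0 ≤ J i) (hr : ∀ i, 0 ≤ r i) :
    monDim A * ((∏ i, J i) * ∏ i, r i ^ A i) ^ (1 / monDim A) ≤ ∑ i, (J i + A i * r i) := by
  set D := monDim A with hD_def
  have hsum : ∑ _i : ι, 1 / D + ∑ i, A i / D = 1 := by
    rw [Finset.sum_const, ← Finset.sum_div, Finset.card_univ, nsmul_eq_mul, mul_one_div, ← add_div,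
      ← monDim, ← hD_def, div_self hD.ne']
  have hamgm := geom_mean_le_arith_mean_weighted (Finset.univ : Finset (ι ⊕ ι))
    (Sum.elim (fun _ => 1 / D) fun i => A i / D) (Sum.elim J r)
    (by rintro (i | i) _ <;> simp [hA, hD.le, div_nonneg]) (by simpa using hsum)
    (by rintro (i | i) _ <;> simp [hJ, hr])
  simp only [Fintype.prod_sum_type, Fintype.sum_sum_type, Sum.elim_inl, Sum.elim_inr] at hamgm
  have hgeom : ((∏ i, J i) * ∏ i, r i ^ A i) ^ (1 / D) =
      (∏ i, J i ^ (1 / D)) * ∏ i, r i ^ (A i / D) := by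
    rw [mul_rpow (Finset.prod_nonneg fun i _ => hJ i)
      (Finset.prod_nonneg fun i _ => rpow_nonneg (hr i) _),
      ← finsetProd_rpow _ _ fun i _ => hJ i,
      ← finsetProd_rpow _ _ fun i _ => rpow_nonneg (hr i) _]
    simp only [← rpow_mul (hr _), mul_one_div]
  calc D * ((∏ i, J i) * ∏ i, r i ^ A i) ^ (1 / D)
      ≤ D * (∑ i, 1 / D * J i + ∑ i, A i / D * r i) := by
        rw [hgeom]
        exact mul_le_mul_of_nonneg_left hamgm hD.le
    _ = ∑ i, (J i + A i * r i) := by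
        rw [← Finset.sum_add_distrib, Finset.mul_sum]
        refine Finset.sum_congr rfl fun i _ => ?_
        field_simp

/-- The part of `(-R, R)` in the positivity region of the weight `|t| ^ a`: half of it
if `a > 0`, all of it if `a = 0`. -/
def monomialInterval {a R : ℝ} (ha : 0 ≤ a) (hR : 0 < R) : WeightedInterval where
  left := if 0 < a then 0 else -R
  right := R
  weight t := |t| ^ a
  left_lt_right := by split_ifs <;> linarith
  continuous_weight := continuous_abs.rpow_const fun _ => Or.inr ha
  weight_pos t ht := by
    rcases ha.eq_or_lt with rfl | ha
    · simp
    · rw [if_pos ha] at ht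
      exact rpow_pos_of_pos (abs_pos.2 ht.1.ne') _

section Interval

variable {a R : ℝ} {ha : 0 ≤ a} {hR : 0 < R} {t : ℝ}

lemma mem_Ioo_monomialInterval :
    t ∈ Ioo (monomialInterval ha hR).left (monomialInterval ha hR).right ↔
      |t| < R ∧ (0 < a → 0 < t) := by
  simp only [monomialInterval, mem_Ioo, abs_lt]
  split_ifs with h
  · exact ⟨fun ht => ⟨⟨by linarith [ht.1], ht.2⟩, fun _ => ht.1⟩, fun ht => ⟨ht.2 h, ht.1.2⟩⟩
  · exact ⟨fun ht => ⟨ht, fun h' => absurd h' h⟩, fun ht => ht.1⟩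

lemma hasDerivAt_weight_monomialInterval (ht : 0 < a → 0 < t) :
    HasDerivAt (monomialInterval ha hR).weight (a / t * (monomialInterval ha hR).weight t) t := by
  simp only [monomialInterval]
  rcases ha.eq_or_lt with rfl | ha
  · simpa using hasDerivAt_const t (1 : ℝ)
  · have hpow := hasDerivAt_rpow_const (x := t) (p := a) (Or.inl (ht ha).ne')
    rw [rpow_sub_one (ht ha).ne', mul_div_assoc', mul_div_right_comm] at hpow
    rw [abs_of_pos (ht ha)]
    refine hpow.congr_of_eventuallyEq ?_
    filter_upwards [Ioi_mem_nhds (ht ha)] with s hs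
    rw [abs_of_pos hs]

lemma logDeriv_weight_monomialInterval
    (ht : t ∈ Ioo (monomialInterval ha hR).left (monomialInterval ha hR).right) :
    logDeriv (monomialInterval ha hR).weight t = a / t := by
  rw [logDeriv_apply,
    (hasDerivAt_weight_monomialInterval (mem_Ioo_monomialInterval.1 ht).2).deriv,
    mul_div_cancel_right₀ _ ((monomialInterval ha hR).weight_pos t ht).ne']

lemma abs_eq_or_weight_monomialInterval_eq_zero
    (ht : t = (monomialInterval ha hR).left ∨ t = (monomialInterval ha hR).right) :
    |t| = R ∨ (monomialInterval ha hR).weight t = 0 := by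
  simp only [monomialInterval] at ht ⊢
  split_ifs at ht with h
  · exact ht.symm.imp (fun ht => by rw [ht, abs_of_pos hR])
      fun ht => by rw [ht, abs_zero, zero_rpow h.ne']
  · exact Or.inl (by rcases ht with rfl | rfl <;> simp [abs_of_pos hR])

end Interval

/-- The part of the cube `(-R, R)^n` in the positivity region of the monomial weight `x^A`. -/
def monomialBox {ι : Type*} {A : ι → ℝ} (hA : ∀ i, 0 ≤ A i) {R : ℝ} (hR : 0 < R) (i : ι) :
    WeightedInterval :=
  monomialInterval (hA i) hR

lemma mem_openBox_monomialBox {ι : Type*} {A : ι → ℝ} {hA : ∀ i, 0 ≤ A i} {R : ℝ} {hR : 0 < R}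
    {x : ι → ℝ} :
    x ∈ openBox (monomialBox hA hR) ↔ ∀ i, |x i| < R ∧ (0 < A i → 0 < x i) := by
  simp only [openBox, mem_univ_pi, monomialBox, mem_Ioo_monomialInterval]

variable {n : ℕ} {A : Fin n → ℝ} {hA : ∀ i, 0 ≤ A i} {R : ℝ} {hR : 0 < R}
  {F G : (Fin n → ℝ) → ℝ}

lemma EqualMass.logDeriv_mul_knothe_eq (h : EqualMass (boxMeasure (monomialBox hA hR)) F G)
    {x : Fin n → ℝ} (hx : x ∈ openBox (monomialBox hA hR)) (i : Fin n) :
    logDeriv (monomialBox hA hR i).weight (x i) * knothe (monomialBox hA hR) F G x i =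
      A i * (|knothe (monomialBox hA hR) F G x i| / |x i|) := by
  have hT := mem_openBox_monomialBox.1 (h.knothe_mem_openBox hx) i
  have hxi := mem_openBox_monomialBox.1 hx i
  rw [monomialBox, logDeriv_weight_monomialInterval (mem_Ioo_monomialInterval.2 hxi)]
  rcases (hA i).eq_or_lt with hi | hi
  · simp [← hi]
  · rw [abs_of_pos (hT.2 hi), abs_of_pos (hxi.2 hi)]
    ring

lemma EqualMass.monDim_mul_rpow_le_divergence_knothe
    (h : EqualMass (boxMeasure (monomialBox hA hR)) F G) (hD : 0 < monDim A) {x : Fin n → ℝ}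
    (hx : x ∈ openBox (monomialBox hA hR)) :
    monDim A * (F x / G (knothe (monomialBox hA hR) F G x)) ^ (1 / monDim A) ≤
      ∑ i, (knotheDiag (monomialBox hA hR) F G x i + logDeriv (monomialBox hA hR i).weight (x i) *
        knothe (monomialBox hA hR) F G x i) := by
  set B := monomialBox hA hR
  set T := knothe B F G
  have hw : 0 < ∏ i, (B i).weight (x i) :=
    Finset.prod_pos fun i _ => (B i).weight_pos _ (mem_univ_pi.1 hx i)
  have hratio : F x / G (T x) =
      (∏ i, knotheDiag B F G x i) * ∏ i, (|T x i| / |x i|) ^ A i := by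
    have hquot : ∏ i, (|T x i| / |x i|) ^ A i =
        (∏ i, (B i).weight (T x i)) / ∏ i, (B i).weight (x i) := by
      simp only [div_rpow (abs_nonneg _) (abs_nonneg _), Finset.prod_div_distrib]
      rfl
    rw [hquot, div_eq_iff (h.pos_right _).ne', mul_div_assoc', div_mul_eq_mul_div,
      eq_div_iff hw.ne', h.knothe_mongeAmpere hx]
    ring
  simp only [B, T, h.logDeriv_mul_knothe_eq hx]
  rw [hratio]
  exact weighted_amgm hA hD (fun i => (h.knotheDiag_pos hx i).le) fun i => by positivity

lemma EqualMass.monDim_mul_integral_le (h : EqualMass (boxMeasure (monomialBox hA hR)) F G)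
    (hD : 0 < monDim A) {u : (Fin n → ℝ) → ℝ} (hu : ContDiff ℝ 1 u) (hu_nonneg : ∀ x, 0 ≤ u x)
    (hu_bdry : ∀ x i, |x i| = R → u x = 0) :
    monDim A * ∫ x, u x * (F x / G (knothe (monomialBox hA hR) F G x)) ^ (1 / monDim A)
        ∂boxMeasure (monomialBox hA hR) ≤
      -∫ x, fderiv ℝ u x (knothe (monomialBox hA hR) F G x) ∂boxMeasure (monomialBox hA hR) := by
  set B := monomialBox hA hR
  set T := knothe B F G
  have hT : Continuous T := h.continuous_knothe
  obtain ⟨hint, hdiv⟩ := integral_mul_divergence B (T := T) (J := knotheDiag B F G)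
    (fun i t ht => (hasDerivAt_weight_monomialInterval
      (mem_Ioo_monomialInterval.1 ht).2).differentiableAt) hu hT h.measurable_knotheDiag
    (fun x hx => h.hasDerivAt_knothe hx)
    (fun x hx i => by
      rw [h.logDeriv_mul_knothe_eq hx]
      have := hA i
      have := (h.knotheDiag_pos hx i).le
      have := hu_nonneg x
      positivity)
    (fun x i hxi => by
      rcases abs_eq_or_weight_monomialInterval_eq_zero hxi with hxi | hxi
      · rw [hu_bdry x i hxi, zero_mul]
      · exact mul_eq_zero_of_right _ hxi)
  have hratio : Continuous fun x => u x * (F x / G (T x)) ^ (1 / monDim A) :=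
    hu.continuous.mul ((h.continuous_left.div (h.continuous_right.comp hT)
      fun x => (h.pos_right _).ne').rpow_const
        fun x => Or.inl (div_pos (h.pos_left _) (h.pos_right _)).ne')
  rw [← hdiv, ← integral_const_mul]
  refine integral_mono_ae ((integrable_boxMeasure_of_continuous B hratio).const_mul _) hint
    ((ae_mem_openBox B).mono fun x hx => ?_)
  change monDim A * (u x * _) ≤ _
  rw [mul_left_comm]
  exact mul_le_mul_of_nonneg_left (h.monDim_mul_rpow_le_divergence_knothe hD hx) (hu_nonneg x)

end MonomialBox

section BoxDuality

/-- The exponents of the transport proof of the Sobolev inequality in dimension `D`: `r` is the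
critical exponent of `p`, and the divergence theorem is applied to the power `s` of the function. -/
structure SobolevExponents (D p q r s : ℝ) : Prop where
  dim_pos : 0 < D
  holderConjugate : p.HolderConjugate q
  one_lt : 1 < s
  add_div_eq : s + r / D = r
  sub_one_mul_eq : (s - 1) * q = r

lemma SobolevExponents.pos {D p q r s : ℝ} (e : SobolevExponents D p q r s) : 0 < r :=
  e.sub_one_mul_eq ▸ mul_pos (sub_pos.2 e.one_lt) e.holderConjugate.symm.pos

variable {n : ℕ} {A : Fin n → ℝ} {hA : ∀ i, 0 ≤ A i} {R : ℝ} {hR : 0 < R} {p q r s : ℝ}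
  {f : EuclideanSpace ℝ (Fin n) → ℝ} {F G : (Fin n → ℝ) → ℝ}

lemma continuous_abs_comp_toLp_rpow (hf : Continuous f) (hr : 0 ≤ r) :
    Continuous fun x : Fin n → ℝ => |f (WithLp.toLp 2 x)| ^ r :=
  (hf.comp (PiLp.continuous_toLp 2 _)).abs.rpow_const fun _ => Or.inr hr

lemma memLp_boxMeasure_of_continuous {B : Fin n → WeightedInterval} (hF : Continuous F)
    (hp : 0 < p) : MemLp F (ENNReal.ofReal p) (boxMeasure B) := by
  rw [← integrable_norm_rpow_iff hF.aestronglyMeasurable (by simpa using hp) (by simp),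
    ENNReal.toReal_ofReal hp.le]
  exact integrable_boxMeasure_of_continuous B (hF.norm.rpow_const fun _ => Or.inr hp.le)

lemma abs_fderiv_abs_rpow_comp_toLp_le (hf : ContDiff ℝ 1 f) (hs : 1 < s) (x v : Fin n → ℝ) :
    |fderiv ℝ (fun y : Fin n → ℝ => |f (WithLp.toLp 2 y)| ^ s) x v| ≤
      s * (‖fderiv ℝ f (WithLp.toLp 2 x)‖ *
        (|f (WithLp.toLp 2 x)| ^ (s - 1) * ‖WithLp.toLp 2 v‖)) := by
  have hcomp : fderiv ℝ (fun y : Fin n → ℝ => |f (WithLp.toLp 2 y)| ^ s) x v =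
      fderiv ℝ (fun z => ‖f z‖ ^ s) (WithLp.toLp 2 x) (WithLp.toLp 2 v) :=
    congrArg (fun φ => φ v)
      ((PiLp.continuousLinearEquiv 2 ℝ fun _ : Fin n => ℝ).symm.comp_right_fderiv
        (f := fun z => ‖f z‖ ^ s) (x := x))
  rw [hcomp]
  calc ‖fderiv ℝ (fun z => ‖f z‖ ^ s) (WithLp.toLp 2 x) (WithLp.toLp 2 v)‖
      ≤ s * ‖f (WithLp.toLp 2 x)‖ ^ (s - 1) * ‖fderiv ℝ f (WithLp.toLp 2 x)‖ *
          ‖WithLp.toLp 2 v‖ :=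
        (ContinuousLinearMap.le_opNorm _ _).trans (mul_le_mul_of_nonneg_right
          (norm_fderiv_norm_rpow_le (hf.differentiable one_ne_zero) hs) (norm_nonneg _))
    _ = _ := by
        rw [norm_eq_abs]
        ring

lemma EqualMass.integral_norm_fderiv_mul_le
    {B : Fin n → WeightedInterval} (h : EqualMass (boxMeasure B) F G)
    (e : SobolevExponents (monDim A) p q r s) (hf : ContDiff ℝ 1 f)
    (hfF : ∀ x, |f (WithLp.toLp 2 x)| ^ r ≤ F x) :
    ∫ x, ‖fderiv ℝ f (WithLp.toLp 2 x)‖ *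
        (|f (WithLp.toLp 2 x)| ^ (s - 1) * ‖WithLp.toLp 2 (knothe B F G x)‖) ∂boxMeasure B ≤
      (∫ x, ‖fderiv ℝ f (WithLp.toLp 2 x)‖ ^ p ∂boxMeasure B) ^ (1 / p) *
        (∫ y, G y * ‖WithLp.toLp 2 y‖ ^ q ∂boxMeasure B) ^ (1 / q) := by
  have hpq := e.holderConjugate
  have hs := sub_pos.2 e.one_lt
  set T := knothe B F G
  have hnorm : Continuous fun x : Fin n → ℝ => ‖WithLp.toLp 2 x‖ :=
    (PiLp.continuous_toLp 2 _).norm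
  have hgrad : Continuous fun x : Fin n → ℝ => ‖fderiv ℝ f (WithLp.toLp 2 x)‖ :=
    ((hf.continuous_fderiv one_ne_zero).comp (PiLp.continuous_toLp 2 _)).norm
  have hflux : Continuous fun x : Fin n → ℝ =>
      |f (WithLp.toLp 2 x)| ^ (s - 1) * ‖WithLp.toLp 2 (T x)‖ :=
    (continuous_abs_comp_toLp_rpow hf.continuous hs.le).mul (hnorm.comp h.continuous_knothe)
  refine (integral_mul_le_Lp_mul_Lq_of_nonneg hpq (Eventually.of_forall fun x => norm_nonneg _)
    (Eventually.of_forall fun x => by positivity) (memLp_boxMeasure_of_continuous hgrad hpq.pos)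
    (memLp_boxMeasure_of_continuous hflux hpq.symm.pos)).trans ?_
  refine mul_le_mul_of_nonneg_left (rpow_le_rpow (integral_nonneg fun x => by positivity) ?_
    (one_div_nonneg.2 hpq.symm.nonneg)) (rpow_nonneg (integral_nonneg fun x => by positivity) _)
  have hnormq : Continuous fun x : Fin n → ℝ => ‖WithLp.toLp 2 x‖ ^ q :=
    hnorm.rpow_const fun _ => Or.inr hpq.symm.nonneg
  rw [← h.integral_comp_knothe hnormq fun x => by positivity]
  refine integral_mono (integrable_boxMeasure_of_continuous B
    (hflux.rpow_const fun _ => Or.inr hpq.symm.nonneg)) (integrable_boxMeasure_of_continuous B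
      (h.continuous_left.mul (hnormq.comp h.continuous_knothe))) fun x => ?_
  change (_ * _) ^ q ≤ _
  rw [mul_rpow (by positivity) (norm_nonneg _), ← rpow_mul (abs_nonneg _), e.sub_one_mul_eq]
  exact mul_le_mul_of_nonneg_right (hfF x) (by positivity)

lemma EqualMass.monDim_mul_integral_abs_rpow_mul_le
    (h : EqualMass (boxMeasure (monomialBox hA hR)) F G)
    (e : SobolevExponents (monDim A) p q r s) (hf : ContDiff ℝ 1 f)
    (hf_supp : ∀ x, R ≤ ‖x‖ → f x = 0) (hfF : ∀ x, |f (WithLp.toLp 2 x)| ^ r ≤ F x) :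
    monDim A * ∫ x, |f (WithLp.toLp 2 x)| ^ s *
        (F x / G (knothe (monomialBox hA hR) F G x)) ^ (1 / monDim A)
          ∂boxMeasure (monomialBox hA hR) ≤
      s * ((∫ x, ‖fderiv ℝ f (WithLp.toLp 2 x)‖ ^ p ∂boxMeasure (monomialBox hA hR)) ^ (1 / p) *
        (∫ y, G y * ‖WithLp.toLp 2 y‖ ^ q ∂boxMeasure (monomialBox hA hR)) ^ (1 / q)) := by
  have hs := e.one_lt
  set B := monomialBox hA hR
  set T := knothe B F G
  set u : (Fin n → ℝ) → ℝ := fun x => |f (WithLp.toLp 2 x)| ^ s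
  have hu : ContDiff ℝ 1 u :=
    ((contDiff_norm_rpow hs).comp hf).comp
      (PiLp.continuousLinearEquiv 2 ℝ fun _ : Fin n => ℝ).symm.contDiff
  have hu_bdry (x : Fin n → ℝ) (i : Fin n) (hx : |x i| = R) : u x = 0 := by
    simp only [u]
    rw [hf_supp _ (hx ▸ PiLp.norm_apply_le (WithLp.toLp 2 x) i), abs_zero, zero_rpow (by linarith)]
  have hflux : Continuous fun x : Fin n → ℝ => s * (‖fderiv ℝ f (WithLp.toLp 2 x)‖ *
      (|f (WithLp.toLp 2 x)| ^ (s - 1) * ‖WithLp.toLp 2 (T x)‖)) :=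
    continuous_const.mul (((hf.continuous_fderiv one_ne_zero).comp
      (PiLp.continuous_toLp 2 _)).norm.mul ((continuous_abs_comp_toLp_rpow hf.continuous
        (by linarith)).mul ((PiLp.continuous_toLp 2 _).comp h.continuous_knothe).norm))
  calc _ ≤ ∫ x, -fderiv ℝ u x (T x) ∂boxMeasure B := by
        rw [integral_neg]
        exact h.monDim_mul_integral_le e.dim_pos hu (fun x => by positivity) hu_bdry
    _ ≤ ∫ x, s * (‖fderiv ℝ f (WithLp.toLp 2 x)‖ *
          (|f (WithLp.toLp 2 x)| ^ (s - 1) * ‖WithLp.toLp 2 (T x)‖)) ∂boxMeasure B :=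
        integral_mono (integrable_boxMeasure_of_continuous B
            ((hu.continuous_fderiv one_ne_zero).clm_apply h.continuous_knothe).neg)
          (integrable_boxMeasure_of_continuous B hflux) fun x =>
            (neg_le_abs _).trans (abs_fderiv_abs_rpow_comp_toLp_le hf hs x (T x))
    _ ≤ _ := by
        rw [integral_const_mul]
        exact mul_le_mul_of_nonneg_left (h.integral_norm_fderiv_mul_le e hf hfF) (by linarith)

lemma abs_rpow_mul_rpow_neg_le (e : SobolevExponents (monDim A) p q r s) {a b g : ℝ}
    (hab : |a| ^ r ≤ b) (hg : 0 < g) :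
    |a| ^ r * g ^ (-(1 / monDim A)) ≤ |a| ^ s * (b / g) ^ (1 / monDim A) := by
  have hD := e.dim_pos
  have hs := e.one_lt
  have ha : 0 ≤ |a| ^ r := by positivity
  calc |a| ^ r * g ^ (-(1 / monDim A))
      = |a| ^ s * ((|a| ^ r) ^ (1 / monDim A) * g ^ (-(1 / monDim A))) := by
        rw [← mul_assoc, ← rpow_mul (abs_nonneg _), mul_one_div,
          ← rpow_add_of_nonneg (abs_nonneg _) (by linarith) (div_nonneg e.pos.le hD.le),
          e.add_div_eq]
    _ ≤ |a| ^ s * (b ^ (1 / monDim A) * g ^ (-(1 / monDim A))) := by gcongr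
    _ = |a| ^ s * (b / g) ^ (1 / monDim A) := by
        rw [div_rpow (ha.trans hab) hg.le, rpow_neg hg.le, ← div_eq_mul_inv]

lemma EqualMass.monDim_mul_sub_le {ε C : ℝ} (hε : 0 ≤ ε)
    (h : EqualMass (boxMeasure (monomialBox hA hR)) (fun x => |f (WithLp.toLp 2 x)| ^ r + ε) G)
    (e : SobolevExponents (monDim A) p q r s) (hf : ContDiff ℝ 1 f)
    (hf_supp : ∀ x, R ≤ ‖x‖ → f x = 0)
    (hC : ∀ x ∈ openBox (monomialBox hA hR), G x ^ (-(1 / monDim A)) ≤ C) :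
    monDim A * ((∫ x, G x ^ (1 - 1 / monDim A) ∂boxMeasure (monomialBox hA hR)) -
        ε * (C * (boxMeasure (monomialBox hA hR)).real univ)) ≤
      s * ((∫ x, ‖fderiv ℝ f (WithLp.toLp 2 x)‖ ^ p ∂boxMeasure (monomialBox hA hR)) ^ (1 / p) *
        (∫ y, G y * ‖WithLp.toLp 2 y‖ ^ q ∂boxMeasure (monomialBox hA hR)) ^ (1 / q)) := by
  refine (mul_le_mul_of_nonneg_left ?_ e.dim_pos.le).trans
    (h.monDim_mul_integral_abs_rpow_mul_le e hf hf_supp fun x => le_add_of_nonneg_right hε)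
  set B := monomialBox hA hR
  set F : (Fin n → ℝ) → ℝ := fun x => |f (WithLp.toLp 2 x)| ^ r + ε
  set T := knothe B F G
  have hinv : Continuous fun x => G x ^ (-(1 / monDim A)) :=
    h.continuous_right.rpow_const fun x => Or.inl (h.pos_right x).ne'
  have hpush : ∫ x, G x ^ (1 - 1 / monDim A) ∂boxMeasure B =
      ∫ x, F x * G (T x) ^ (-(1 / monDim A)) ∂boxMeasure B := by
    rw [h.integral_comp_knothe hinv fun x => (rpow_pos_of_pos (h.pos_right x) _).le]
    refine integral_congr_ae (Eventually.of_forall fun x => ?_)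
    change G x ^ (1 - 1 / monDim A) = G x * G x ^ (-(1 / monDim A))
    rw [sub_eq_add_neg, rpow_add (h.pos_right x), rpow_one]
  have hconst : C * (boxMeasure B).real univ = ∫ _, C ∂boxMeasure B := by
    rw [integral_const, smul_eq_mul, mul_comm]
  have hFT : Continuous fun x => F x * G (T x) ^ (-(1 / monDim A)) :=
    h.continuous_left.mul (hinv.comp h.continuous_knothe)
  have hratio : Continuous fun x =>
      |f (WithLp.toLp 2 x)| ^ s * (F x / G (T x)) ^ (1 / monDim A) :=
    (continuous_abs_comp_toLp_rpow hf.continuous (by linarith [e.one_lt])).mul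
      ((h.continuous_left.div (h.continuous_right.comp h.continuous_knothe)
        fun x => (h.pos_right _).ne').rpow_const
          fun x => Or.inl (div_pos (h.pos_left _) (h.pos_right _)).ne')
  have hFT_int := integrable_boxMeasure_of_continuous B hFT
  rw [hpush, hconst, ← integral_const_mul, ← integral_sub hFT_int (integrable_const _)]
  refine integral_mono_ae (hFT_int.sub (integrable_const _))
    (integrable_boxMeasure_of_continuous B hratio) ((ae_mem_openBox B).mono fun x hx => ?_)
  have hε_le := mul_le_mul_of_nonneg_left (hC _ (h.knothe_mem_openBox hx)) hε
  have hle := abs_rpow_mul_rpow_neg_le e (a := f (WithLp.toLp 2 x)) (b := F x)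
    (le_add_of_nonneg_right hε) (h.pos_right (T x))
  simp only [F, add_mul] at hle hε_le ⊢
  linarith

lemma exists_rpow_le_openBox {B : Fin n → WeightedInterval} (hG : Continuous G)
    (hG_pos : ∀ x, 0 < G x) (z : ℝ) : ∃ C, ∀ x ∈ openBox B, G x ^ z ≤ C := by
  obtain ⟨C, hC⟩ := (isCompact_univ_pi fun i =>
    isCompact_Icc (a := (B i).left) (b := (B i).right)).bddAbove_image
      (hG.rpow_const fun x => Or.inl (hG_pos x).ne').continuousOn
  exact ⟨C, fun x hx => hC (mem_image_of_mem _ (Set.pi_mono (fun i _ => Ioo_subset_Icc_self) hx))⟩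

lemma equalMass_add_const {B : Fin n → WeightedInterval} (hF : Continuous F) (hG : Continuous G)
    (hF_nonneg : ∀ x, 0 ≤ F x) (hG_pos : ∀ x, 0 < G x)
    (hmass : ∫ x, F x ∂boxMeasure B = ∫ x, G x ∂boxMeasure B) {ε : ℝ} (hε : 0 < ε) :
    EqualMass (boxMeasure B) (fun x => F x + ε) (fun x =>
      (1 + ε * ((boxMeasure B).real univ / ∫ x, G x ∂boxMeasure B)) * G x) := by
  have hm : 0 < ∫ x, G x ∂boxMeasure B := integral_boxMeasure_pos B hG hG_pos
  refine ⟨hF.add continuous_const, hG.const_mul _, fun x => ?_, fun x => ?_, ?_⟩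
  · exact add_pos_of_nonneg_of_pos (hF_nonneg x) hε
  · exact mul_pos (by positivity) (hG_pos x)
  · rw [integral_add (integrable_boxMeasure_of_continuous B hF) (integrable_const _), hmass,
      integral_const, integral_const_mul, smul_eq_mul]
    field_simp

lemma monDim_mul_integral_rpow_le_of_box (e : SobolevExponents (monDim A) p q r s)
    (hf : ContDiff ℝ 1 f) (hf_supp : ∀ x, R ≤ ‖x‖ → f x = 0) (hG : Continuous G)
    (hG_pos : ∀ x, 0 < G x)
    (hmass : ∫ x, |f (WithLp.toLp 2 x)| ^ r ∂boxMeasure (monomialBox hA hR) =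
      ∫ x, G x ∂boxMeasure (monomialBox hA hR)) :
    monDim A * ∫ x, G x ^ (1 - 1 / monDim A) ∂boxMeasure (monomialBox hA hR) ≤
      s * ((∫ x, ‖fderiv ℝ f (WithLp.toLp 2 x)‖ ^ p ∂boxMeasure (monomialBox hA hR)) ^ (1 / p) *
        (∫ y, G y * ‖WithLp.toLp 2 y‖ ^ q ∂boxMeasure (monomialBox hA hR)) ^ (1 / q)) := by
  have hD := e.dim_pos
  have hq := e.holderConjugate.symm.pos
  set B := monomialBox hA hR
  obtain ⟨C, hC⟩ := exists_rpow_le_openBox (B := B) hG hG_pos (-(1 / monDim A))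
  have hm : 0 < ∫ x, G x ∂boxMeasure B := integral_boxMeasure_pos B hG hG_pos
  set c : ℝ → ℝ := fun ε => 1 + ε * ((boxMeasure B).real univ / ∫ x, G x ∂boxMeasure B)
  have hstep : ∀ᶠ ε in 𝓝[>] (0 : ℝ), monDim A * (c ε ^ (1 - 1 / monDim A) *
        (∫ x, G x ^ (1 - 1 / monDim A) ∂boxMeasure B) - ε * (C * (boxMeasure B).real univ)) ≤
      s * ((∫ x, ‖fderiv ℝ f (WithLp.toLp 2 x)‖ ^ p ∂boxMeasure B) ^ (1 / p) *
        (c ε * ∫ y, G y * ‖WithLp.toLp 2 y‖ ^ q ∂boxMeasure B) ^ (1 / q)) := by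
    filter_upwards [self_mem_nhdsWithin] with ε hε
    have hε : 0 < ε := hε
    have hc : 1 ≤ c ε := le_add_of_nonneg_right (by positivity)
    have hle := (equalMass_add_const (continuous_abs_comp_toLp_rpow hf.continuous e.pos.le) hG
      (fun x => by positivity) hG_pos hmass hε).monDim_mul_sub_le (C := C) hε.le e hf hf_supp
        fun x hx => (rpow_le_rpow_of_nonpos (hG_pos x) (le_mul_of_one_le_left (hG_pos x).le hc)
          (neg_nonpos.2 (one_div_pos.2 hD).le)).trans (hC x hx)
    change _ * ((∫ x, (c ε * G x) ^ (1 - 1 / monDim A) ∂boxMeasure B) - _) ≤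
      s * (_ * (∫ y, c ε * G y * _ ∂boxMeasure B) ^ (1 / q)) at hle
    simpa only [mul_rpow (one_pos.trans_le hc).le (hG_pos _).le, mul_assoc, integral_const_mul]
      using hle
  have hc_lim : Tendsto c (𝓝[>] 0) (𝓝 1) := by
    have : Tendsto c (𝓝 0) (𝓝 (c 0)) := Continuous.tendsto (by fun_prop) 0
    simpa [c] using this.mono_left nhdsWithin_le_nhds
  have hid : Tendsto (fun ε : ℝ => ε) (𝓝[>] 0) (𝓝 0) := nhdsWithin_le_nhds
  have hlim := le_of_tendsto_of_tendsto
    ((((hc_lim.rpow_const (p := 1 - 1 / monDim A) (Or.inl one_ne_zero)).mul_const _).sub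
      (hid.mul_const _)).const_mul _)
    ((((hc_lim.mul_const _).rpow_const (p := 1 / q) (Or.inr (by positivity))).const_mul
      _).const_mul _) hstep
  simpa only [one_rpow, one_mul, zero_mul, sub_zero] using hlim

end BoxDuality

section MonomialMeasure

lemma pi_withDensity_ofReal {ι : Type*} [Fintype ι] {E : ι → Type*} [∀ i, MeasurableSpace (E i)]
    {μ : ∀ i, Measure (E i)} [∀ i, SigmaFinite (μ i)] {f : ∀ i, E i → ℝ}
    (hf : ∀ i, Integrable (f i) (μ i)) (hf_nonneg : ∀ i t, 0 ≤ f i t) :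
    Measure.pi (fun i => (μ i).withDensity fun t => ENNReal.ofReal (f i t)) =
      (Measure.pi μ).withDensity fun x => ENNReal.ofReal (∏ i, f i (x i)) := by
  have (i : ι) := isFiniteMeasure_withDensity_ofReal (hf i).2
  refine Measure.pi_eq fun s hs => ?_
  rw [withDensity_apply _ (.univ_pi hs), Measure.restrict_pi_pi,
    ← ofReal_integral_eq_lintegral_ofReal (.fintype_prod_dep fun i => (hf i).restrict)
      (Eventually.of_forall fun x => Finset.prod_nonneg fun i _ => hf_nonneg i _),
    integral_fintype_prod_eq_prod,
    ENNReal.ofReal_prod_of_nonneg fun i _ => integral_nonneg (hf_nonneg i)]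
  refine Finset.prod_congr rfl fun i _ => ?_
  rw [withDensity_apply _ (hs i), ofReal_integral_eq_lintegral_ofReal (hf i).restrict
    (Eventually.of_forall (hf_nonneg i))]

variable {ι : Type*} [Fintype ι] {A : ι → ℝ}

/-- The measure `x^A dx` on `ℝ^n_A`. -/
def monMeasure (A : ι → ℝ) : Measure (EuclideanSpace ℝ ι) :=
  (volume.restrict (monSet A)).withDensity fun x => ENNReal.ofReal (monWeight A x)

variable (A) in
lemma measurableSet_monSet : MeasurableSet (monSet A) := by
  simp only [monSet, ofPred_forall]
  exact .iInter fun i => .iInter fun _ =>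
    measurableSet_lt measurable_const (by fun_prop)

lemma monWeight_nonneg (x : EuclideanSpace ℝ ι) : 0 ≤ monWeight A x :=
  Finset.prod_nonneg fun _ _ => rpow_nonneg (abs_nonneg _) _

lemma continuous_monWeight (hA : ∀ i, 0 ≤ A i) : Continuous (monWeight A) :=
  continuous_finsetProd _ fun i _ => Continuous.rpow_const (by fun_prop) fun _ => Or.inr (hA i)

variable (A) in
lemma measurable_monWeight : Measurable (monWeight A) :=
  Finset.measurable_fun_prod _ fun i _ => Measurable.pow_const (by fun_prop) _

lemma integral_monMeasure (f : EuclideanSpace ℝ ι → ℝ) :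
    ∫ x, f x ∂monMeasure A = ∫ x in monSet A, f x * monWeight A x := by
  rw [monMeasure, integral_withDensity_eq_integral_toReal_smul
    (measurable_monWeight A).ennreal_ofReal (Eventually.of_forall fun _ => ENNReal.ofReal_lt_top)]
  simp only [ENNReal.toReal_ofReal (monWeight_nonneg _), smul_eq_mul, mul_comm]

lemma isLocallyFiniteMeasure_monMeasure (hA : ∀ i, 0 ≤ A i) :
    IsLocallyFiniteMeasure (monMeasure A) :=
  IsLocallyFiniteMeasure.withDensity_ofReal (continuous_monWeight hA)

lemma monWeight_smul {c : ℝ} (hc : 0 < c) (x : EuclideanSpace ℝ ι) :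
    monWeight A (c • x) = c ^ (∑ i, A i) * monWeight A x := by
  simp only [monWeight, PiLp.smul_apply, smul_eq_mul, abs_mul, abs_of_pos hc,
    mul_rpow hc.le (abs_nonneg _), Finset.prod_mul_distrib, rpow_sum_of_pos hc]

lemma smul_mem_monSet_iff {c : ℝ} (hc : 0 < c) {x : EuclideanSpace ℝ ι} :
    c • x ∈ monSet A ↔ x ∈ monSet A := by
  simp [monSet, hc]

open Pointwise in
lemma monMeasure_smul {c : ℝ} (hc : 0 < c) {s : Set (EuclideanSpace ℝ ι)}
    (hs : MeasurableSet s) :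
    monMeasure A (c • s) = ENNReal.ofReal (c ^ monDim A) * monMeasure A s := by
  set w : Set (EuclideanSpace ℝ ι) → EuclideanSpace ℝ ι → ENNReal := fun s =>
    (s ∩ monSet A).indicator fun x => ENNReal.ofReal (monWeight A x) with hw
  have hmon {s : Set (EuclideanSpace ℝ ι)} (hs : MeasurableSet s) :
      monMeasure A s = ∫⁻ x, w s x := by
    rw [monMeasure, withDensity_apply _ hs, Measure.restrict_restrict hs,
      lintegral_indicator (hs.inter (measurableSet_monSet A))]
  have hw_smul (x : EuclideanSpace ℝ ι) :
      w (c • s) (c • x) = ENNReal.ofReal (c ^ (∑ i, A i)) * w s x := by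
    have hmem : c • x ∈ c • s ∩ monSet A ↔ x ∈ s ∩ monSet A :=
      and_congr (smul_mem_smul_set_iff₀ hc.ne' s x) (smul_mem_monSet_iff hc)
    by_cases hx : x ∈ s ∩ monSet A
    · simp only [hw, indicator_of_mem hx, indicator_of_mem (hmem.2 hx), monWeight_smul hc,
        ENNReal.ofReal_mul (rpow_nonneg hc.le _)]
    · simp only [hw, indicator_of_notMem hx, indicator_of_notMem (mt hmem.1 hx), mul_zero]
  have hw_meas {s : Set (EuclideanSpace ℝ ι)} (hs : MeasurableSet s) : Measurable (w s) :=
    (measurable_monWeight A).ennreal_ofReal.indicator (hs.inter (measurableSet_monSet A))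
  have hcs : MeasurableSet (c • s) := hs.const_smul_of_ne_zero hc.ne'
  have hvol : (volume : Measure (EuclideanSpace ℝ ι)) =
      ENNReal.ofReal (c ^ Fintype.card ι) • volume.map (c • ·) := by
    rw [Measure.map_addHaar_smul _ hc.ne', smul_smul, finrank_euclideanSpace,
      ← ENNReal.ofReal_mul (by positivity), abs_of_pos (by positivity),
      mul_inv_cancel₀ (by positivity), ENNReal.ofReal_one, one_smul]
  rw [hmon hcs, hmon hs, hvol, lintegral_smul_measure,
    lintegral_map (hw_meas hcs) (measurable_const_smul c), ← hvol]
  simp only [hw_smul]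
  rw [lintegral_const_mul _ (hw_meas hs), smul_eq_mul, ← mul_assoc,
    ← ENNReal.ofReal_mul (by positivity), ← rpow_natCast, ← rpow_add hc, monDim]

lemma measurePreserving_withDensity_comp {E E' : Type*} [MeasurableSpace E] [MeasurableSpace E']
    {μ : Measure E} {ν : Measure E'} {φ : E → E'} (hφ : MeasurePreserving φ μ ν)
    {g : E' → ENNReal} (hg : Measurable g) :
    MeasurePreserving φ (μ.withDensity fun x => g (φ x)) (ν.withDensity g) := by
  refine ⟨hφ.measurable, Measure.ext fun s hs => ?_⟩
  rw [Measure.map_apply hφ.measurable hs, withDensity_apply _ (hφ.measurable hs),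
    withDensity_apply _ hs, (hφ.restrict_preimage hs).lintegral_comp hg]

lemma mem_openBox_monomialBox_iff_mem_ball {hA : ∀ i, 0 ≤ A i} {R : ℝ} {hR : 0 < R} {x : ι → ℝ} :
    x ∈ openBox (monomialBox hA hR) ↔ x ∈ Metric.ball 0 R ∧ WithLp.toLp 2 x ∈ monSet A := by
  simp [mem_openBox_monomialBox, monSet, pi_norm_lt_iff hR, forall_and]

lemma boxMeasure_monomialBox (hA : ∀ i, 0 ≤ A i) {R : ℝ} (hR : 0 < R) :
    boxMeasure (monomialBox hA hR) = (volume.restrict (openBox (monomialBox hA hR))).withDensity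
      fun x => ENNReal.ofReal (monWeight A (WithLp.toLp 2 x)) := by
  rw [openBox, volume_pi, Measure.restrict_pi_pi]
  exact pi_withDensity_ofReal (fun i => (monomialBox hA hR i).continuous_weight.integrableOn_Icc
    |>.mono_set Ioo_subset_Icc_self) fun i t => rpow_nonneg (abs_nonneg t) _

lemma measurePreserving_toLp_boxMeasure (hA : ∀ i, 0 ≤ A i) {R : ℝ} (hR : 0 < R) :
    MeasurePreserving (WithLp.toLp 2) (boxMeasure (monomialBox hA hR))
      ((monMeasure A).restrict (WithLp.ofLp ⁻¹' Metric.ball 0 R)) := by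
  have hball : MeasurableSet (WithLp.ofLp ⁻¹' Metric.ball 0 R : Set (EuclideanSpace ℝ ι)) :=
    (Metric.isOpen_ball.preimage (PiLp.continuous_ofLp 2 _)).measurableSet
  have hpre : WithLp.toLp 2 ⁻¹' (WithLp.ofLp ⁻¹' Metric.ball 0 R ∩ monSet A) =
      openBox (monomialBox hA hR) :=
    Set.ext fun _ => mem_openBox_monomialBox_iff_mem_ball.symm
  have h := measurePreserving_withDensity_comp ((PiLp.volume_preserving_toLp ι).restrict_preimage
    (hball.inter (measurableSet_monSet A))) (measurable_monWeight A).ennreal_ofReal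
  rw [hpre] at h
  rwa [boxMeasure_monomialBox, monMeasure, restrict_withDensity hball,
    Measure.restrict_restrict hball]

lemma aecover_ofLp_preimage_ball (μ : Measure (EuclideanSpace ℝ ι)) :
    AECover μ atTop fun R : ℝ => (WithLp.ofLp ⁻¹' Metric.ball 0 R) where
  ae_eventually_mem := Eventually.of_forall fun x => by
    filter_upwards [eventually_gt_atTop ‖WithLp.ofLp x‖] with R hR
    simpa using hR
  measurableSet _ := (Metric.isOpen_ball.preimage (PiLp.continuous_ofLp 2 _)).measurableSet

end MonomialMeasure

section Radial

variable {E : Type*} [NormedAddCommGroup E] [MeasurableSpace E] [OpensMeasurableSpace E]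
  {μ : Measure E} {V D : ℝ}

lemma setLIntegral_Iio_rpow_density (hV : 0 ≤ V) (hD : 0 < D) {r : ℝ} (hr : 0 < r) :
    ∫⁻ t in Iio r ∩ Ioi 0, ENNReal.ofReal (V * D * t ^ (D - 1)) = ENNReal.ofReal (V * r ^ D) := by
  have hint : IntervalIntegrable (fun t : ℝ => V * D * t ^ (D - 1)) volume 0 r :=
    (intervalIntegral.intervalIntegrable_rpow' (by linarith)).const_mul _
  rw [inter_comm, Ioi_inter_Iio, ← ofReal_integral_eq_lintegral_ofReal
    (hint.1.mono_set Ioo_subset_Ioc_self) ((ae_restrict_mem measurableSet_Ioo).mono fun t ht =>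
      mul_nonneg (by positivity) (rpow_nonneg ht.1.le _)), ← integral_Ioc_eq_integral_Ioo,
    ← intervalIntegral.integral_of_le hr.le, intervalIntegral.integral_const_mul,
    integral_rpow (Or.inl (by linarith)), sub_add_cancel, zero_rpow hD.ne', sub_zero]
  congr 1
  field_simp

lemma map_norm_eq_withDensity (hV : 0 ≤ V) (hD : 0 < D)
    (hμ : ∀ r, 0 < r → μ (Metric.ball 0 r) = ENNReal.ofReal (V * r ^ D)) :
    μ.map (‖·‖) =
      (volume.restrict (Ioi 0)).withDensity fun t => ENNReal.ofReal (V * D * t ^ (D - 1)) := by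
  have hball (r : ℝ) : μ.map (‖·‖) (Iio r) = μ (Metric.ball 0 r) := by
    rw [Measure.map_apply measurable_norm measurableSet_Iio]
    congr 1
    ext x
    simp
  refine Measure.ext_of_generateFrom_of_iUnion _ (fun k : ℕ => Iio (k : ℝ))
    (borel_eq_generateFrom_Iio ℝ ▸ BorelSpace.measurable_eq) isPiSystem_Iio ?_
    (fun k => ⟨k, rfl⟩) (fun k => ?_) ?_
  · exact eq_univ_of_forall fun t => mem_iUnion.2 (exists_nat_gt t)
  · rw [hball]
    rcases (Nat.cast_nonneg (α := ℝ) k).eq_or_lt with hk | hk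
    · simp [← hk]
    · simp [hμ _ hk]
  · rintro _ ⟨r, rfl⟩
    rw [hball, withDensity_apply _ measurableSet_Iio, Measure.restrict_restrict measurableSet_Iio]
    rcases le_or_gt r 0 with hr | hr
    · rw [Metric.ball_eq_empty.2 hr, inter_comm, Ioi_inter_Iio, Ioo_eq_empty_of_le hr]
      simp
    · rw [hμ r hr, setLIntegral_Iio_rpow_density hV hD hr]

lemma integral_comp_norm_of_measure_ball (hV : 0 ≤ V) (hD : 0 < D)
    (hμ : ∀ r, 0 < r → μ (Metric.ball 0 r) = ENNReal.ofReal (V * r ^ D))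
    {g : ℝ → ℝ} (hg : Measurable g) :
    ∫ x, g ‖x‖ ∂μ = V * D * ∫ t in Ioi 0, t ^ (D - 1) * g t := by
  rw [← integral_map measurable_norm.aemeasurable hg.aestronglyMeasurable,
    map_norm_eq_withDensity hV hD hμ, integral_withDensity_eq_integral_toReal_smul
      (by fun_prop) (Eventually.of_forall fun _ => ENNReal.ofReal_lt_top), ← integral_const_mul]
  refine setIntegral_congr_fun measurableSet_Ioi fun t ht => ?_
  have : 0 ≤ t ^ (D - 1) := rpow_nonneg (le_of_lt ht) _
  simp only [ENNReal.toReal_ofReal (mul_nonneg (mul_nonneg hV hD.le) this), smul_eq_mul]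
  ring

lemma integral_exp_neg_norm_sq_of_measure_ball (hV : 0 ≤ V) (hD : 0 < D)
    (hμ : ∀ r, 0 < r → μ (Metric.ball 0 r) = ENNReal.ofReal (V * r ^ D)) :
    ∫ x, exp (-‖x‖ ^ 2) ∂μ = V * Gamma (1 + D / 2) := by
  have hgauss := integral_rpow_mul_exp_neg_rpow two_pos (q := D - 1) (by linarith)
  simp only [rpow_two, sub_add_cancel] at hgauss
  rw [integral_comp_norm_of_measure_ball hV hD hμ (g := fun t => exp (-t ^ 2)) (by fun_prop),
    hgauss, add_comm 1, Gamma_add_one (by positivity)]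
  ring

lemma integral_Ioo_rpow_mul_one_sub_rpow {a b : ℝ} (ha : 0 < a) (hb : 0 < b) :
    ∫ t in Ioo (0 : ℝ) 1, t ^ (a - 1) * (1 - t) ^ (b - 1) = ProbabilityTheory.beta a b := by
  have hbeta := ProbabilityTheory.beta_pos ha hb
  have h := ProbabilityTheory.lintegral_betaPDF_eq_one ha hb
  rw [ProbabilityTheory.lintegral_betaPDF, ← ENNReal.toReal_eq_one_iff,
    ← integral_eq_lintegral_of_nonneg_ae ((ae_restrict_mem measurableSet_Ioo).mono fun t ht => ?_)
      (by fun_prop)] at h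
  · simp only [mul_assoc, integral_const_mul] at h
    rwa [one_div_mul_eq_div, div_eq_one_iff_eq hbeta.ne'] at h
  · exact mul_nonneg (mul_nonneg (by positivity) (rpow_nonneg ht.1.le _))
      (rpow_nonneg (sub_pos.2 ht.2).le _)

lemma integral_Ioi_rpow_mul_one_add_rpow {a b : ℝ} (ha : 0 < a) (hb : 0 < b) :
    ∫ t in Ioi (0 : ℝ), t ^ (a - 1) * (1 + t) ^ (-(a + b)) = ProbabilityTheory.beta a b := by
  have himage : (fun t : ℝ => t / (1 - t)) '' Ioo 0 1 = Ioi 0 := by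
    ext y
    refine ⟨?_, fun hy => ⟨y / (1 + y), ?_, ?_⟩⟩
    · rintro ⟨t, ht, rfl⟩
      exact div_pos ht.1 (sub_pos.2 ht.2)
    · have : 0 < y := hy
      exact ⟨by positivity, (div_lt_one (by positivity)).2 (by linarith)⟩
    · have : 0 < y := hy
      field_simp
      ring
  have hderiv : ∀ t ∈ Ioo (0 : ℝ) 1,
      HasDerivWithinAt (fun t : ℝ => t / (1 - t)) (1 / (1 - t) ^ 2) (Ioo 0 1) t := fun t ht => by
    have h := (hasDerivAt_id t).div ((hasDerivAt_id t).const_sub 1) (sub_pos.2 ht.2).ne'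
    refine (h.congr_deriv ?_).hasDerivWithinAt
    simp
  have hinj : InjOn (fun t : ℝ => t / (1 - t)) (Ioo 0 1) := fun t ht u hu h => by
    have := (div_eq_div_iff (sub_pos.2 ht.2).ne' (sub_pos.2 hu.2).ne').1 h
    linarith
  rw [← integral_Ioo_rpow_mul_one_sub_rpow ha hb, ← himage,
    integral_image_eq_integral_abs_deriv_smul measurableSet_Ioo hderiv hinj]
  refine setIntegral_congr_fun measurableSet_Ioo fun t ht => ?_
  have h1t : 0 < 1 - t := sub_pos.2 ht.2
  have hone_add : 1 + t / (1 - t) = (1 - t)⁻¹ := by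
    field_simp
    ring
  have hexp : (1 - t) ^ (b - 1) = (1 - t) ^ (a + b) * ((1 - t) ^ (a - 1))⁻¹ * ((1 - t) ^ 2)⁻¹ := by
    rw [← rpow_neg h1t.le, ← rpow_natCast, ← rpow_neg h1t.le, ← rpow_add h1t, ← rpow_add h1t]
    congr 1
    push_cast
    ring
  simp only [smul_eq_mul]
  rw [hone_add, hexp, abs_of_pos (by positivity), div_rpow ht.1.le h1t.le, inv_rpow h1t.le,
    rpow_neg h1t.le, inv_inv]
  ring

lemma integral_one_add_norm_rpow_of_measure_ball (hV : 0 ≤ V) (hD : 0 < D)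
    (hμ : ∀ r, 0 < r → μ (Metric.ball 0 r) = ENNReal.ofReal (V * r ^ D))
    {q z : ℝ} (hq : 0 < q) (hz : D / q < z) :
    ∫ x, (1 + ‖x‖ ^ q) ^ (-z) ∂μ = Gamma (z - D / q) * Gamma (1 + D / q) / Gamma z * V := by
  have hDq : 0 < D / q := by positivity
  have hbeta := integral_Ioi_rpow_mul_one_add_rpow hDq (sub_pos.2 hz)
  rw [add_sub_cancel, ← integral_comp_rpow_Ioi_of_pos hq, ProbabilityTheory.beta,
    add_sub_cancel] at hbeta
  have hsubst : ∀ t ∈ Ioi (0 : ℝ), (q * t ^ (q - 1)) • ((t ^ q) ^ (D / q - 1) *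
      (1 + t ^ q) ^ (-z)) = q * (t ^ (D - 1) * (1 + t ^ q) ^ (-z)) := fun t ht => by
    have hpow : t ^ (D - 1) = t ^ (q - 1) * (t ^ q) ^ (D / q - 1) := by
      rw [← rpow_mul (le_of_lt ht), ← rpow_add ht]
      congr 1
      field_simp
      ring
    rw [hpow, smul_eq_mul]
    ring
  rw [setIntegral_congr_fun measurableSet_Ioi hsubst, integral_const_mul] at hbeta
  rw [integral_comp_norm_of_measure_ball hV hD hμ (g := fun t => (1 + t ^ q) ^ (-z))
    (by fun_prop), add_comm 1, Gamma_add_one hDq.ne', ← mul_right_inj' hq.ne', mul_left_comm,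
    hbeta]
  field_simp

end Radial

section UnitBall

variable {ι : Type*} [Fintype ι] {A : ι → ℝ}

lemma integral_indicator_abs_rpow_mul_exp_neg_sq {a : ℝ} (ha : 0 ≤ a) :
    ∫ t : ℝ, {t | 0 < a → 0 < t}.indicator (fun t => |t| ^ a * exp (-t ^ 2)) t =
      Gamma ((a + 1) / 2) * if 0 < a then 1 / 2 else 1 := by
  rcases ha.eq_or_lt with rfl | ha
  · simpa [-one_div, Gamma_one_half_eq] using integral_gaussian 1
  · have h := integral_rpow_mul_exp_neg_rpow two_pos (by linarith : -1 < a)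
    simp only [ha, forall_const, if_true]
    rw [mul_comm, ← h]
    refine (integral_indicator measurableSet_Ioi).trans
      (setIntegral_congr_fun measurableSet_Ioi fun t ht => ?_)
    simp only [abs_of_pos (mem_Ioi.1 ht), rpow_two]

lemma indicator_monSet_exp_neg_norm_sq_mul_monWeight (x : EuclideanSpace ℝ ι) :
    (monSet A).indicator (fun x => exp (-‖x‖ ^ 2) * monWeight A x) x =
      ∏ i, {t | 0 < A i → 0 < t}.indicator (fun t => |t| ^ A i * exp (-t ^ 2)) (x i) := by
  by_cases hx : x ∈ monSet A
  · have hmem (i) : x i ∈ {t | 0 < A i → 0 < t} := hx i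
    rw [indicator_of_mem hx, Finset.prod_congr rfl fun i _ => indicator_of_mem (hmem i) _,
      Finset.prod_mul_distrib, ← exp_sum, Finset.sum_neg_distrib, EuclideanSpace.norm_sq_eq,
      mul_comm, monWeight]
    simp
  · obtain ⟨i, hi⟩ := not_forall.1 hx
    have hnotMem : x i ∉ {t | 0 < A i → 0 < t} := hi
    rw [indicator_of_notMem hx,
      Finset.prod_eq_zero (Finset.mem_univ i) (indicator_of_notMem hnotMem _)]

lemma integral_exp_neg_norm_sq_monMeasure (hA : ∀ i, 0 ≤ A i) :
    ∫ x, exp (-‖x‖ ^ 2) ∂monMeasure A = (∏ i, Gamma ((A i + 1) / 2)) / 2 ^ monK A := by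
  rw [integral_monMeasure, ← integral_indicator (measurableSet_monSet A),
    ← (PiLp.volume_preserving_toLp ι).integral_comp
      (MeasurableEquiv.toLp 2 (ι → ℝ)).measurableEmbedding]
  simp only [indicator_monSet_exp_neg_norm_sq_mul_monWeight]
  rw [integral_fintype_prod_volume_eq_prod fun i =>
    {t | 0 < A i → 0 < t}.indicator fun t => |t| ^ A i * exp (-t ^ 2)]
  simp only [integral_indicator_abs_rpow_mul_exp_neg_sq (hA _)]
  rw [Finset.prod_mul_distrib, Finset.prod_ite, Finset.prod_const, Finset.prod_const_one, mul_one,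
    div_pow, one_pow, mul_one_div, monK, Nat.card_eq_fintype_card, Fintype.card_subtype]

/-- The mass which `x^A dx` gives to the part of the unit ball lying in `ℝ^n_A`. -/
def monBallVolume (A : ι → ℝ) : ℝ :=
  (∏ i, Gamma ((A i + 1) / 2)) / 2 ^ monK A / Gamma (1 + monDim A / 2)

lemma monBallVolume_pos (hA : ∀ i, 0 ≤ A i) : 0 < monBallVolume A := by
  have hΓ (i) : 0 < Gamma ((A i + 1) / 2) := Gamma_pos_of_pos (by linarith [hA i])
  have hD : 0 ≤ monDim A := add_nonneg (Nat.cast_nonneg _) (Finset.sum_nonneg fun i _ => hA i)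
  exact div_pos (div_pos (Finset.prod_pos fun i _ => hΓ i) (by positivity))
    (Gamma_pos_of_pos (by positivity))

lemma monMeasure_ball (hA : ∀ i, 0 ≤ A i) (hD : 0 < monDim A) {r : ℝ} (hr : 0 < r) :
    monMeasure A (Metric.ball 0 r) = ENNReal.ofReal (monBallVolume A * r ^ monDim A) := by
  have := isLocallyFiniteMeasure_monMeasure hA
  set V := (monMeasure A).real (Metric.ball 0 1)
  have hball (r : ℝ) (hr : 0 < r) :
      monMeasure A (Metric.ball 0 r) = ENNReal.ofReal (V * r ^ monDim A) := by
    have h := monMeasure_smul (A := A) hr (measurableSet_ball (x := 0) (ε := 1))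
    rw [smul_unitBall_of_pos hr] at h
    rw [h, mul_comm, ENNReal.ofReal_mul measureReal_nonneg, ofReal_measureReal]
  have hgauss := integral_exp_neg_norm_sq_of_measure_ball measureReal_nonneg hD hball
  rw [integral_exp_neg_norm_sq_monMeasure hA] at hgauss
  rw [hball r hr, monBallVolume, hgauss,
    mul_div_cancel_right₀ _ (Gamma_pos_of_pos (by positivity)).ne']

end UnitBall

section Bubble

lemma sub_div_eq_div_of_holderConjugate {p q : ℝ} (hpq : p.HolderConjugate q) (D : ℝ) :
    D - D / q = D / p := by
  simp only [div_eq_mul_inv]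
  linear_combination (-D) * hpq.inv_add_inv_eq_one

namespace SobolevExponents

variable {D p q r s : ℝ}

lemma of_lt (hp : 1 < p) (hpD : p < D) :
    SobolevExponents D p (p / (p - 1)) (D * p / (D - p)) (p * (D - 1) / (D - p)) where
  dim_pos := by linarith
  holderConjugate := .conjExponent hp
  one_lt := by
    rw [one_lt_div (sub_pos.2 hpD)]
    nlinarith
  add_div_eq := by
    have := (sub_pos.2 hpD).ne'
    have : D ≠ 0 := by linarith
    field_simp
    ring
  sub_one_mul_eq := by
    have := (sub_pos.2 hpD).ne'
    have := (sub_pos.2 hp).ne'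
    field_simp
    ring

lemma inv_sub_inv_eq (e : SobolevExponents D p q r s) : p⁻¹ - D⁻¹ = r⁻¹ := by
  have hs : s - 1 = r * q⁻¹ := by
    rw [← e.sub_one_mul_eq, mul_inv_cancel_right₀ e.holderConjugate.symm.ne_zero]
  exact eq_inv_of_mul_eq_one_right (by
    linear_combination r * e.holderConjugate.inv_add_inv_eq_one + hs - e.add_div_eq)

lemma div_sub_one_eq (e : SobolevExponents D p q r s) : D / p - 1 = D / r := by
  rw [div_eq_mul_inv D r, ← e.inv_sub_inv_eq, mul_sub, mul_inv_cancel₀ e.dim_pos.ne',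
    div_eq_mul_inv]

lemma sub_one_sub_div_eq (e : SobolevExponents D p q r s) : D - 1 - D / q = D / r := by
  rw [sub_right_comm, sub_div_eq_div_of_holderConjugate e.holderConjugate, e.div_sub_one_eq]

lemma div_lt_sub_one (e : SobolevExponents D p q r s) : D / q < D - 1 := by
  rw [← sub_pos, e.sub_one_sub_div_eq]
  exact div_pos e.dim_pos e.pos

lemma one_lt_dim (e : SobolevExponents D p q r s) : 1 < D :=
  sub_pos.1 ((div_pos e.dim_pos e.holderConjugate.symm.pos).trans e.div_lt_sub_one)

lemma mul_div_eq (e : SobolevExponents D p q r s) : s * (D / r) = D - 1 := by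
  have := e.pos.ne'
  have := e.dim_pos.ne'
  rw [eq_sub_of_add_eq e.add_div_eq]
  field_simp

end SobolevExponents

variable {ι : Type*} [Fintype ι] {A : ι → ℝ} {p q r s : ℝ}

/-- The mass of the Barenblatt–Talenti profile `(1 + |x|^q)^{-D}` with respect to `x^A dx`. -/
def bubbleMass (A : ι → ℝ) (q : ℝ) : ℝ :=
  ∫ x, (1 + ‖x‖ ^ q) ^ (-monDim A) ∂monMeasure A

lemma integral_one_add_norm_rpow_monMeasure (hA : ∀ i, 0 ≤ A i) (hD : 0 < monDim A) (hq : 0 < q)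
    {z : ℝ} (hz : monDim A / q < z) :
    ∫ x, (1 + ‖x‖ ^ q) ^ (-z) ∂monMeasure A =
      Gamma (z - monDim A / q) * Gamma (1 + monDim A / q) / Gamma z * monBallVolume A :=
  integral_one_add_norm_rpow_of_measure_ball (monBallVolume_pos hA).le hD
    (fun _ => monMeasure_ball hA hD) hq hz

lemma integrable_one_add_norm_rpow_monMeasure (hA : ∀ i, 0 ≤ A i) (hD : 0 < monDim A)
    (hq : 0 < q) {z : ℝ} (hz : monDim A / q < z) :
    Integrable (fun x => (1 + ‖x‖ ^ q) ^ (-z)) (monMeasure A) := by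
  refine .of_integral_ne_zero ?_
  rw [integral_one_add_norm_rpow_monMeasure hA hD hq hz]
  have hDq : 0 < monDim A / q := by positivity
  exact (mul_pos (div_pos (mul_pos (Gamma_pos_of_pos (sub_pos.2 hz))
    (Gamma_pos_of_pos (by positivity))) (Gamma_pos_of_pos (hDq.trans hz)))
      (monBallVolume_pos hA)).ne'

lemma bubbleMass_eq (hA : ∀ i, 0 ≤ A i) (hD : 0 < monDim A) (hpq : p.HolderConjugate q) :
    bubbleMass A q =
      Gamma (monDim A / p) * Gamma (1 + monDim A / q) / Gamma (monDim A) * monBallVolume A := by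
  rw [bubbleMass, integral_one_add_norm_rpow_monMeasure hA hD hpq.symm.pos
    (div_lt_self hD hpq.symm.lt), sub_div_eq_div_of_holderConjugate hpq]

lemma bubbleMass_pos (hA : ∀ i, 0 ≤ A i) (hD : 0 < monDim A) (hpq : p.HolderConjugate q) :
    0 < bubbleMass A q := by
  have hp := hpq.pos
  have hq := hpq.symm.pos
  rw [bubbleMass_eq hA hD hpq]
  exact mul_pos (div_pos (mul_pos (Gamma_pos_of_pos (by positivity))
    (Gamma_pos_of_pos (by positivity))) (Gamma_pos_of_pos hD)) (monBallVolume_pos hA)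

section Moments

lemma one_add_rpow_mul_rpow_eq {t : ℝ} (ht : 0 ≤ t) (q D : ℝ) :
    (1 + t ^ q) ^ (-D) * t ^ q = (1 + t ^ q) ^ (1 - D) - (1 + t ^ q) ^ (-D) := by
  have : 0 < 1 + t ^ q := by positivity
  rw [sub_eq_add_neg 1, add_comm 1 (-_), rpow_add_one this.ne']
  ring

variable (hA : ∀ i, 0 ≤ A i) (e : SobolevExponents (monDim A) p q r s)
include hA e

lemma integrable_bubble : Integrable (fun x => (1 + ‖x‖ ^ q) ^ (-monDim A)) (monMeasure A) :=
  integrable_one_add_norm_rpow_monMeasure hA e.dim_pos e.holderConjugate.symm.pos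
    (div_lt_self e.dim_pos e.holderConjugate.symm.lt)

lemma integrable_bubble_rpow :
    Integrable (fun x => (1 + ‖x‖ ^ q) ^ (1 - monDim A)) (monMeasure A) := by
  simpa only [neg_sub] using integrable_one_add_norm_rpow_monMeasure hA e.dim_pos
    e.holderConjugate.symm.pos e.div_lt_sub_one

lemma integrable_bubble_mul_norm_rpow :
    Integrable (fun x => (1 + ‖x‖ ^ q) ^ (-monDim A) * ‖x‖ ^ q) (monMeasure A) := by
  simp only [one_add_rpow_mul_rpow_eq (norm_nonneg _)]
  exact (integrable_bubble_rpow hA e).sub (integrable_bubble hA e)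

lemma integral_bubble_rpow :
    ∫ x, (1 + ‖x‖ ^ q) ^ (1 - monDim A) ∂monMeasure A = s * bubbleMass A q := by
  have hpq := e.holderConjugate
  have hD : 0 < monDim A - 1 := sub_pos.2 e.one_lt_dim
  have hDr : 0 < monDim A / r := div_pos e.dim_pos e.pos
  have hΓD : Gamma (monDim A) = s * (monDim A / r) * Gamma (monDim A - 1) := by
    rw [e.mul_div_eq, ← Gamma_add_one hD.ne', sub_add_cancel]
  have hΓp : Gamma (monDim A / p) = monDim A / r * Gamma (monDim A / r) := by
    rw [← Gamma_add_one hDr.ne', ← e.div_sub_one_eq, sub_add_cancel]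
  have h := integral_one_add_norm_rpow_monMeasure hA e.dim_pos hpq.symm.pos e.div_lt_sub_one
  rw [neg_sub] at h
  have := (Gamma_pos_of_pos hD).ne'
  have := e.pos.ne'
  have := e.dim_pos.ne'
  have := (zero_lt_one.trans e.one_lt).ne'
  rw [h, bubbleMass_eq hA e.dim_pos hpq, hΓD, hΓp, e.sub_one_sub_div_eq]
  field_simp

lemma integral_bubble_mul_norm_rpow :
    ∫ x, (1 + ‖x‖ ^ q) ^ (-monDim A) * ‖x‖ ^ q ∂monMeasure A = (s - 1) * bubbleMass A q := by
  simp only [one_add_rpow_mul_rpow_eq (norm_nonneg _)]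
  rw [integral_sub (integrable_bubble_rpow hA e) (integrable_bubble hA e),
    integral_bubble_rpow hA e, ← bubbleMass]
  ring

end Moments

lemma monC1_eq (hA : ∀ i, 0 ≤ A i) :
    monC1 A = (monDim A)⁻¹ * monBallVolume A ^ (-(1 / monDim A)) := by
  rw [monC1, rpow_neg (monBallVolume_pos hA).le, ← inv_rpow (monBallVolume_pos hA).le,
    monBallVolume, div_div, inv_div]

lemma monCp_eq (hA : ∀ i, 0 ≤ A i) (hp : 1 < p) (hpD : p < monDim A) (hq : q = p / (p - 1)) :
    monCp A p = (monDim A)⁻¹ * ((monDim A * (p - 1) / (monDim A - p)) ^ (1 / q) *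
      bubbleMass A q ^ (-(1 / monDim A))) := by
  have hp1 : 0 < p - 1 := sub_pos.2 hp
  have hD : 0 < monDim A := by linarith
  have hpD' : 0 < (p - 1) / (monDim A - p) := div_pos hp1 (sub_pos.2 hpD)
  have hpq : p.HolderConjugate q := hq ▸ .conjExponent hp
  have hp0 := hpq.pos
  have hq0 := hpq.symm.pos
  have hV := monBallVolume_pos hA
  have hΓ {z : ℝ} (hz : 0 < z) : 0 < Gamma z := Gamma_pos_of_pos hz
  set z := q * Gamma (monDim A) / (Gamma (monDim A / p) * Gamma (monDim A / q)) with hz_def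
  have hz : 0 < z := div_pos (mul_pos hq0 (hΓ hD))
    (mul_pos (hΓ (div_pos hD hp0)) (hΓ (div_pos hD hq0)))
  have hexp : 1 - 1 / p - 1 / monDim A = 1 / q + -(1 / monDim A) := by
    linear_combination -hpq.one_div_add_one_div
  have hmass : bubbleMass A q = monBallVolume A * monDim A * z⁻¹ := by
    rw [bubbleMass_eq hA hD hpq, add_comm, Gamma_add_one (div_pos hD hq0).ne', hz_def]
    field_simp
  rw [monCp, if_neg hp.ne', ← hq, ← hz_def, monC1_eq hA, hexp, hmass, mul_div_assoc (monDim A),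
    mul_rpow hD.le hpD'.le, mul_rpow (mul_pos hV hD).le (inv_pos.2 hz).le, mul_rpow hV.le hD.le,
    inv_rpow hz.le, rpow_neg hz.le, inv_inv, rpow_add hD]
  ring

end Bubble

section Sobolev

variable {n : ℕ} {A : Fin n → ℝ} {p q r s : ℝ} {f G : EuclideanSpace ℝ (Fin n) → ℝ}

lemma setIntegral_ofLp_preimage_ball_eq {μ : Measure (EuclideanSpace ℝ (Fin n))} {R : ℝ}
    {g : EuclideanSpace ℝ (Fin n) → ℝ} (hg : ∀ x, R ≤ ‖x‖ → g x = 0) :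
    ∫ x in WithLp.ofLp ⁻¹' Metric.ball 0 R, g x ∂μ = ∫ x, g x ∂μ := by
  refine setIntegral_eq_integral_of_forall_compl_eq_zero fun x hx => hg x ?_
  have hx' : R ≤ ‖WithLp.ofLp x‖ := by simpa using hx
  exact hx'.trans ((pi_norm_le_iff_of_nonneg (norm_nonneg x)).2 (PiLp.norm_apply_le x))

lemma monDim_mul_setIntegral_rpow_le (hA : ∀ i, 0 ≤ A i)
    (e : SobolevExponents (monDim A) p q r s) (hf : ContDiff ℝ 1 f) {R : ℝ} (hR : 0 < R)
    (hf_supp : ∀ x ∈ tsupport f, ‖x‖ < R) (hG : Continuous G) (hG_pos : ∀ x, 0 < G x)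
    (hmass : ∫ x, |f x| ^ r ∂monMeasure A =
      ∫ x in WithLp.ofLp ⁻¹' Metric.ball 0 R, G x ∂monMeasure A) :
    monDim A * ∫ x in WithLp.ofLp ⁻¹' Metric.ball 0 R, G x ^ (1 - 1 / monDim A) ∂monMeasure A ≤
      s * ((∫ x, ‖fderiv ℝ f x‖ ^ p ∂monMeasure A) ^ (1 / p) *
        (∫ x in WithLp.ofLp ⁻¹' Metric.ball 0 R, G x * ‖x‖ ^ q ∂monMeasure A) ^ (1 / q)) := by
  have hnotMem (x) (hx : R ≤ ‖x‖) : x ∉ tsupport f := fun h => (hf_supp x h).not_ge hx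
  have hf_zero (x) (hx : R ≤ ‖x‖) : f x = 0 := image_eq_zero_of_notMem_tsupport (hnotMem x hx)
  have hf_rpow (x) (hx : R ≤ ‖x‖) : |f x| ^ r = 0 := by
    rw [hf_zero x hx, abs_zero, zero_rpow e.pos.ne']
  have hf'_rpow (x) (hx : R ≤ ‖x‖) : ‖fderiv ℝ f x‖ ^ p = 0 := by
    rw [image_eq_zero_of_notMem_tsupport fun h => hnotMem x hx (tsupport_fderiv_subset ℝ h),
      norm_zero, zero_rpow e.holderConjugate.ne_zero]
  have htransfer (g : EuclideanSpace ℝ (Fin n) → ℝ) :=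
    (measurePreserving_toLp_boxMeasure hA hR).integral_comp
      (MeasurableEquiv.toLp 2 (Fin n → ℝ)).measurableEmbedding g
  rw [← setIntegral_ofLp_preimage_ball_eq hf_rpow] at hmass
  rw [← setIntegral_ofLp_preimage_ball_eq hf'_rpow]
  simp only [← htransfer] at hmass ⊢
  exact monDim_mul_integral_rpow_le_of_box e hf hf_zero
    (hG.comp (PiLp.continuous_toLp 2 _)) (fun _ => hG_pos _) hmass

lemma integral_monMeasure_pos {ι : Type*} [Fintype ι] {A : ι → ℝ} (hA : ∀ i, 0 ≤ A i)
    (hD : 0 < monDim A) {G : EuclideanSpace ℝ ι → ℝ} (hG_pos : ∀ x, 0 < G x)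
    (hG_int : Integrable G (monMeasure A)) : 0 < ∫ x, G x ∂monMeasure A := by
  have hball : 0 < monMeasure A (Metric.ball 0 1) := by
    rw [monMeasure_ball hA hD one_pos, one_rpow, mul_one]
    exact ENNReal.ofReal_pos.2 (monBallVolume_pos hA)
  rw [integral_pos_iff_support_of_nonneg (fun x => (hG_pos x).le) hG_int,
    eq_univ_of_forall fun x => Function.mem_support.2 (hG_pos x).ne']
  exact hball.trans_le (measure_mono (subset_univ _))

/- Transport on a cube needs equal masses on that cube, so `G` is rescaled by a factor which tends
to `1` as the cubes exhaust the space. -/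
lemma monDim_mul_integral_rpow_le (hA : ∀ i, 0 ≤ A i) (e : SobolevExponents (monDim A) p q r s)
    (hf : ContDiff ℝ 1 f) (hf_supp : HasCompactSupport f) (hG : Continuous G)
    (hG_pos : ∀ x, 0 < G x) (hG_int : Integrable G (monMeasure A))
    (hG_rpow : Integrable (fun x => G x ^ (1 - 1 / monDim A)) (monMeasure A))
    (hG_moment : Integrable (fun x => G x * ‖x‖ ^ q) (monMeasure A))
    (hmass : ∫ x, |f x| ^ r ∂monMeasure A = ∫ x, G x ∂monMeasure A) :
    monDim A * ∫ x, G x ^ (1 - 1 / monDim A) ∂monMeasure A ≤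
      s * ((∫ x, ‖fderiv ℝ f x‖ ^ p ∂monMeasure A) ^ (1 / p) *
        (∫ x, G x * ‖x‖ ^ q ∂monMeasure A) ^ (1 / q)) := by
  set μ := monMeasure A
  set cube : ℝ → Set (EuclideanSpace ℝ (Fin n)) := fun R => WithLp.ofLp ⁻¹' Metric.ball 0 R
  have hm : 0 < ∫ x, G x ∂μ := integral_monMeasure_pos hA e.dim_pos hG_pos hG_int
  have hq : 0 < q := e.holderConjugate.symm.pos
  have hexhaust {g : EuclideanSpace ℝ (Fin n) → ℝ} (hg : Integrable g μ) :
      Tendsto (fun R => ∫ x in cube R, g x ∂μ) atTop (𝓝 (∫ x, g x ∂μ)) :=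
    (aecover_ofLp_preimage_ball μ).integral_tendsto_of_countably_generated hg
  set c : ℝ → ℝ := fun R => (∫ x, G x ∂μ) / ∫ x in cube R, G x ∂μ
  have hc_lim : Tendsto c atTop (𝓝 1) := by
    have h := (tendsto_const_nhds (x := ∫ x, G x ∂μ)).div (hexhaust hG_int) hm.ne'
    rwa [div_self hm.ne'] at h
  obtain ⟨R₀, hR₀⟩ := hf_supp.isBounded.exists_norm_le
  have hcube : ∀ᶠ R in atTop,
      monDim A * (c R ^ (1 - 1 / monDim A) * ∫ x in cube R, G x ^ (1 - 1 / monDim A) ∂μ) ≤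
      s * ((∫ x, ‖fderiv ℝ f x‖ ^ p ∂μ) ^ (1 / p) *
        (c R * ∫ x in cube R, G x * ‖x‖ ^ q ∂μ) ^ (1 / q)) := by
    filter_upwards [eventually_gt_atTop 0, eventually_gt_atTop R₀,
      (hexhaust hG_int).eventually_const_lt hm] with R hR hRR₀ hmR
    have hc : 0 < c R := div_pos hm hmR
    have hle := monDim_mul_setIntegral_rpow_le hA e hf hR (fun x hx => (hR₀ x hx).trans_lt hRR₀)
      (hG.const_mul (c R)) (fun x => mul_pos hc (hG_pos x))
      (by rw [hmass, integral_const_mul, div_mul_cancel₀ _ hmR.ne'])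
    simpa only [mul_rpow hc.le (hG_pos _).le, mul_assoc, integral_const_mul] using hle
  have hlim := le_of_tendsto_of_tendsto
    (((hc_lim.rpow_const (p := 1 - 1 / monDim A) (Or.inl one_ne_zero)).mul
      (hexhaust hG_rpow)).const_mul _)
    ((((hc_lim.mul (hexhaust hG_moment)).rpow_const (p := 1 / q)
      (Or.inr (by positivity))).const_mul _).const_mul _) hcube
  simpa only [one_rpow, one_mul] using hlim

lemma monDim_mul_rpow_mul_bubbleMass_le (hA : ∀ i, 0 ≤ A i)
    (e : SobolevExponents (monDim A) p q r s) (hf : ContDiff ℝ 1 f)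
    (hf_supp : HasCompactSupport f) {c : ℝ} (hc : 0 < c)
    (hmass : ∫ x, |f x| ^ r ∂monMeasure A = c * bubbleMass A q) :
    monDim A * (c ^ (1 - 1 / monDim A) * bubbleMass A q) ≤
      (∫ x, ‖fderiv ℝ f x‖ ^ p ∂monMeasure A) ^ (1 / p) *
        (c * ((s - 1) * bubbleMass A q)) ^ (1 / q) := by
  have hφ (x : EuclideanSpace ℝ (Fin n)) : 0 < 1 + ‖x‖ ^ q := by positivity
  have hφ_rpow (x : EuclideanSpace ℝ (Fin n)) :
      (c * (1 + ‖x‖ ^ q) ^ (-monDim A)) ^ (1 - 1 / monDim A) =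
        c ^ (1 - 1 / monDim A) * (1 + ‖x‖ ^ q) ^ (1 - monDim A) := by
    rw [mul_rpow hc.le (rpow_pos_of_pos (hφ x) _).le, ← rpow_mul (hφ x).le, mul_sub, mul_one,
      neg_mul, mul_one_div_cancel e.dim_pos.ne', sub_neg_eq_add, neg_add_eq_sub]
  have hφ_cont : Continuous fun x : EuclideanSpace ℝ (Fin n) => (1 + ‖x‖ ^ q) ^ (-monDim A) :=
    ((continuous_norm.rpow_const fun _ => Or.inr e.holderConjugate.symm.nonneg).const_add
      1).rpow_const fun x => Or.inl (hφ x).ne'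
  have hdual := monDim_mul_integral_rpow_le (G := fun x => c * (1 + ‖x‖ ^ q) ^ (-monDim A))
    hA e hf hf_supp (hφ_cont.const_mul c) (fun x => mul_pos hc (rpow_pos_of_pos (hφ x) _))
    ((integrable_bubble hA e).const_mul c)
    (by simpa only [hφ_rpow] using (integrable_bubble_rpow hA e).const_mul _)
    (by simpa only [mul_assoc] using (integrable_bubble_mul_norm_rpow hA e).const_mul c)
    (by rw [hmass, integral_const_mul, bubbleMass])
  simp only [hφ_rpow, mul_assoc, integral_const_mul, integral_bubble_rpow hA e,
    integral_bubble_mul_norm_rpow hA e] at hdual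
  refine le_of_mul_le_mul_left (le_trans (le_of_eq ?_) hdual) (one_pos.trans e.one_lt)
  ring

theorem integral_rpow_le_bubbleMass_mul (hA : ∀ i, 0 ≤ A i)
    (e : SobolevExponents (monDim A) p q r s) (hf : ContDiff ℝ 1 f)
    (hf_supp : HasCompactSupport f) :
    (∫ x, |f x| ^ r ∂monMeasure A) ^ (1 / r) ≤
      (monDim A)⁻¹ * ((s - 1) ^ (1 / q) * bubbleMass A q ^ (-(1 / monDim A))) *
        (∫ x, ‖fderiv ℝ f x‖ ^ p ∂monMeasure A) ^ (1 / p) := by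
  set m := ∫ x, |f x| ^ r ∂monMeasure A
  have hD := e.dim_pos
  have hs : 0 < s - 1 := sub_pos.2 e.one_lt
  have hM := bubbleMass_pos hA hD e.holderConjugate
  obtain hm | hm : 0 = m ∨ 0 < m := eq_or_lt_of_le (by positivity)
  · rw [← hm, zero_rpow (one_div_pos.2 e.pos).ne']
    positivity
  have hexp : 1 - 1 / monDim A = 1 / r + 1 / q := by
    simp only [one_div]
    linear_combination e.inv_sub_inv_eq - e.holderConjugate.inv_add_inv_eq_one
  have hdual := monDim_mul_rpow_mul_bubbleMass_le hA e hf hf_supp (div_pos hm hM)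
    (div_mul_cancel₀ m hM.ne').symm
  rw [mul_left_comm (m / _), div_mul_cancel₀ m hM.ne', mul_rpow hs.le hm.le, div_rpow hm.le hM.le,
    rpow_sub hM, rpow_one, hexp, rpow_add hm] at hdual
  have hMD := rpow_pos_of_pos hM (1 / monDim A)
  have hmq := rpow_pos_of_pos hm (1 / q)
  rw [rpow_neg hM.le]
  refine le_of_mul_le_mul_right ?_ (mul_pos (mul_pos hD hMD) hmq)
  refine (le_of_eq ?_).trans (hdual.trans_eq ?_) <;> field_simp

theorem integral_rpow_le_monCp_mul (hA : ∀ i, 0 ≤ A i) (hp : 1 < p) (hpD : p < monDim A)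
    (hf : ContDiff ℝ 1 f) (hf_supp : HasCompactSupport f) :
    (∫ x, |f x| ^ (monDim A * p / (monDim A - p)) ∂monMeasure A) ^
        ((monDim A - p) / (monDim A * p)) ≤
      monCp A p * (∫ x, ‖fderiv ℝ f x‖ ^ p ∂monMeasure A) ^ (1 / p) := by
  have hs : p * (monDim A - 1) / (monDim A - p) - 1 = monDim A * (p - 1) / (monDim A - p) := by
    have := (sub_pos.2 hpD).ne'
    field_simp
    ring
  rw [monCp_eq hA hp hpD rfl, ← hs, ← one_div_div (monDim A * p)]
  exact integral_rpow_le_bubbleMass_mul hA (.of_lt hp hpD) hf hf_supp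

end Sobolev

section Limit

lemma tendsto_integral_rpow {E α : Type*} [TopologicalSpace E] [T2Space E] [MeasurableSpace E]
    [OpensMeasurableSpace E] {μ : Measure E} [IsFiniteMeasureOnCompacts μ] {l : Filter α}
    [l.IsCountablyGenerated] {g : E → ℝ} (hg : Continuous g) (hg_supp : HasCompactSupport g)
    (hg_nonneg : ∀ x, 0 ≤ g x) {r : α → ℝ} {r₀ : ℝ} (hr : Tendsto r l (𝓝 r₀)) (hr₀ : 0 < r₀) :
    Tendsto (fun t => ∫ x, g x ^ r t ∂μ) l (𝓝 (∫ x, g x ^ r₀ ∂μ)) := by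
  have hr_mem : ∀ᶠ t in l, r t ∈ Ioo 0 (r₀ + 1) := hr.eventually (Ioo_mem_nhds hr₀ (by linarith))
  have hbound : Integrable ((tsupport g).indicator fun x => (1 + g x) ^ (r₀ + 1)) μ :=
    (((hg.const_add 1).rpow_const fun x =>
      Or.inr (by linarith)).continuousOn.integrableOn_compact hg_supp).integrable_indicator
        (isClosed_tsupport g).measurableSet
  refine tendsto_integral_filter_of_dominated_convergence _ ?_ ?_ hbound
    (.of_forall fun x => tendsto_const_nhds.rpow hr (Or.inr hr₀))
  · filter_upwards [hr_mem] with t ht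
    have hsupp : HasCompactSupport fun x => g x ^ r t :=
      hg_supp.comp_left (g := fun y => y ^ r t) (zero_rpow ht.1.ne')
    exact ((hg.rpow_const fun _ => Or.inr ht.1.le).integrable_of_hasCompactSupport
      hsupp).aestronglyMeasurable
  · filter_upwards [hr_mem] with t ht
    refine .of_forall fun x => ?_
    by_cases hx : x ∈ tsupport g
    · have := hg_nonneg x
      rw [indicator_of_mem hx, norm_of_nonneg (by positivity)]
      exact (rpow_le_rpow this (by linarith) ht.1.le).trans
        (rpow_le_rpow_of_exponent_le (by linarith) ht.2.le)
    · rw [indicator_of_notMem hx, image_eq_zero_of_notMem_tsupport hx, zero_rpow ht.1.ne',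
        norm_zero]

lemma tendsto_nhdsGT_id (a : ℝ) : Tendsto (fun x : ℝ => x) (𝓝[>] a) (𝓝 a) :=
  tendsto_id.mono_left nhdsWithin_le_nhds

lemma tendsto_one_div_conjExponent_nhdsGT_one :
    Tendsto (fun p : ℝ => 1 / (p / (p - 1))) (𝓝[>] 1) (𝓝 0) := by
  have h := ((tendsto_nhdsGT_id 1).sub_const 1).div (tendsto_nhdsGT_id 1) one_ne_zero
  rw [sub_self, zero_div] at h
  exact h.congr fun p => (one_div_div p (p - 1)).symm

lemma tendsto_rpow_self_nhdsGT_zero : Tendsto (fun x : ℝ => x ^ x) (𝓝[>] 0) (𝓝 1) := by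
  have h : Tendsto (fun x => exp (x * log x)) (𝓝[>] 0) (𝓝 1) :=
    tendsto_nhdsWithin_of_tendsto_nhds
      ((continuous_exp.comp continuous_mul_log).tendsto' 0 1 (by simp))
  refine h.congr' ?_
  filter_upwards [self_mem_nhdsWithin] with x hx
  rw [rpow_def_of_pos hx, mul_comm]

lemma tendsto_mul_div_sub_rpow_nhdsGT_one {D : ℝ} (hD : 1 < D) :
    Tendsto (fun p => (D * (p - 1) / (D - p)) ^ (1 / (p / (p - 1)))) (𝓝[>] 1) (𝓝 1) := by
  have hid := tendsto_nhdsGT_id 1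
  have hsub : Tendsto (fun p : ℝ => p - 1) (𝓝[>] 1) (𝓝[>] 0) := by
    refine tendsto_nhdsWithin_iff.2 ⟨?_, ?_⟩
    · simpa using hid.sub_const 1
    · filter_upwards [self_mem_nhdsWithin] with p hp using mem_Ioi.2 (sub_pos.2 hp)
  have hself := (tendsto_rpow_self_nhdsGT_zero.comp hsub).rpow (hid.inv₀ one_ne_zero)
    (Or.inl one_ne_zero)
  have hratio := ((tendsto_const_nhds (x := D)).div (hid.const_sub D) (sub_pos.2 hD).ne').rpow
    tendsto_one_div_conjExponent_nhdsGT_one (Or.inl (div_pos (by linarith) (sub_pos.2 hD)).ne')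
  have h := hratio.mul hself
  rw [rpow_zero, one_rpow, one_mul] at h
  refine h.congr' ?_
  filter_upwards [Ioo_mem_nhdsGT hD] with p ⟨hp, hpD⟩
  have hp' : 0 ≤ p - 1 := (sub_pos.2 hp).le
  rw [Pi.div_apply, Function.comp_apply, ← rpow_mul hp', ← div_eq_mul_inv, ← one_div_div p,
    ← mul_rpow (div_pos (by linarith) (sub_pos.2 hpD)).le hp', div_mul_eq_mul_div]

variable {ι : Type*} [Fintype ι] {A : ι → ℝ}

lemma tendsto_bubbleMass_nhdsGT_one (hA : ∀ i, 0 ≤ A i) (hD : 0 < monDim A) :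
    Tendsto (fun p => bubbleMass A (p / (p - 1))) (𝓝[>] 1) (𝓝 (monBallVolume A)) := by
  have hΓ {z : ℝ} (hz : 0 < z) : ContinuousAt Gamma z :=
    (differentiableOn_Gamma_Ioi.differentiableAt (Ioi_mem_nhds hz)).continuousAt
  have hΓp : Tendsto (fun p => Gamma (monDim A / p)) (𝓝[>] 1) (𝓝 (Gamma (monDim A))) :=
    (hΓ hD).tendsto.comp (by
      simpa only [div_one, Pi.div_def] using
        (tendsto_const_nhds (x := monDim A)).div (tendsto_nhdsGT_id 1) one_ne_zero)
  have hΓq : Tendsto (fun p => Gamma (1 + monDim A / (p / (p - 1)))) (𝓝[>] 1) (𝓝 1) := by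
    have h := (tendsto_one_div_conjExponent_nhdsGT_one.const_mul (monDim A)).const_add 1
    simp only [mul_one_div, mul_zero, add_zero] at h
    have hΓ₁ := (hΓ one_pos).tendsto
    rw [Gamma_one] at hΓ₁
    exact hΓ₁.comp h
  have h := ((hΓp.mul hΓq).div_const (Gamma (monDim A))).mul_const (monBallVolume A)
  rw [mul_one, div_self (Gamma_pos_of_pos hD).ne', one_mul] at h
  refine h.congr' ?_
  filter_upwards [self_mem_nhdsWithin] with p hp
  exact (bubbleMass_eq hA hD (.conjExponent hp)).symm

lemma tendsto_monCp_nhdsGT_one (hA : ∀ i, 0 ≤ A i) (hD : 1 < monDim A) :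
    Tendsto (monCp A) (𝓝[>] 1) (𝓝 (monCp A 1)) := by
  have h := ((tendsto_mul_div_sub_rpow_nhdsGT_one hD).mul
    ((tendsto_bubbleMass_nhdsGT_one hA (by linarith)).rpow_const (p := -(1 / monDim A))
      (Or.inl (monBallVolume_pos hA).ne'))).const_mul (monDim A)⁻¹
  rw [one_mul, ← monC1_eq hA] at h
  rw [monCp, if_pos rfl]
  refine h.congr' ?_
  filter_upwards [Ioo_mem_nhdsGT hD] with p ⟨hp, hpD⟩
  rw [monCp_eq hA hp hpD rfl]

theorem integral_rpow_le_monCp_mul_of_one {n : ℕ} {A : Fin n → ℝ} (hA : ∀ i, 0 ≤ A i)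
    (hD : 1 < monDim A) {f : EuclideanSpace ℝ (Fin n) → ℝ} (hf : ContDiff ℝ 1 f)
    (hf_supp : HasCompactSupport f) :
    (∫ x, |f x| ^ (monDim A * 1 / (monDim A - 1)) ∂monMeasure A) ^
        ((monDim A - 1) / (monDim A * 1)) ≤
      monCp A 1 * (∫ x, ‖fderiv ℝ f x‖ ^ (1 : ℝ) ∂monMeasure A) ^ (1 / (1 : ℝ)) := by
  have := isLocallyFiniteMeasure_monMeasure hA
  have hid := tendsto_nhdsGT_id 1
  have hD₀ : 0 < monDim A * 1 := by linarith
  have hD₁ : 0 < monDim A - 1 := sub_pos.2 hD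
  have hlhs := (tendsto_integral_rpow (μ := monMeasure A) hf.continuous.abs hf_supp.norm
    (fun _ => abs_nonneg _) ((hid.const_mul (monDim A)).div (hid.const_sub (monDim A)) hD₁.ne')
    (div_pos hD₀ hD₁)).rpow ((hid.const_sub (monDim A)).div (hid.const_mul (monDim A)) hD₀.ne')
    (Or.inr (div_pos hD₁ hD₀))
  have hrhs := (tendsto_integral_rpow (μ := monMeasure A)
    (hf.continuous_fderiv one_ne_zero).norm (hf_supp.fderiv (𝕜 := ℝ)).norm
    (fun _ => norm_nonneg _) hid one_pos).rpow
    ((tendsto_const_nhds (x := (1 : ℝ))).div hid one_ne_zero) (Or.inr (div_pos one_pos one_pos))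
  refine le_of_tendsto_of_tendsto hlhs ((tendsto_monCp_nhdsGT_one hA hD).mul hrhs) ?_
  filter_upwards [Ioo_mem_nhdsGT hD] with p hp
  exact integral_rpow_le_monCp_mul hA hp.1 hp.2 hf hf_supp

end Limit

end

/-- the sharp Sobolev inequality with monomial weights. -/
theorem sobolev_monomial_weight {n : ℕ} (A : Fin n → ℝ) (hA : ∀ i, 0 ≤ A i)
    (p : ℝ) (hp1 : 1 ≤ p) (hpD : p < monDim A)
    (f : EuclideanSpace ℝ (Fin n) → ℝ) (hf : ContDiff ℝ 1 f) (hsupp : HasCompactSupport f) :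
    (∫ x in monSet A, |f x| ^ (monDim A * p / (monDim A - p)) * monWeight A x) ^
        ((monDim A - p) / (monDim A * p)) ≤
      monCp A p * (∫ x in monSet A, ‖fderiv ℝ f x‖ ^ p * monWeight A x) ^ (1 / p) := by
  simp only [← integral_monMeasure]
  obtain rfl | hp := hp1.eq_or_lt
  · exact integral_rpow_le_monCp_mul_of_one hA hpD hf hsupp
  · exact integral_rpow_le_monCp_mul hA hp hpD hf hsupp
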